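/- Let p ≥ 1 be an integer and a > 2p a real number. Assume (ε_n) is a martingale difference sequence with E[ε_{n+1}² | F_n] = σ² a.s. for all n and sup_{n≥0} E[|ε_{n+1}|^a | F_n] < ∞ a.s. Assume the explosion coefficient f_n tends to zero a.s. and that there exists a positive random sequence (α_n) increasing to infinity and a symmetric positive definite d×d matrix L such that S_n/α_n → L a.s. Then almost surely lim_{n→∞} (1/log d_n) Σ_{k=1}^n f_k (M_k^t S_{k-1}^{-1} M_k)^p = ℓ(p), where ℓ(p) = d σ^{2p} ∏_{j=1}^{p-1} (d + 2j). -/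

import Mathlib

open MeasureTheory ProbabilityTheory Filter Finset Matrix Topology

noncomputable section

/-- `S_n = S + ∑_{k=0}^n Φ_k Φ_kᵗ`. -/
def Smat {Ω : Type*} {d : ℕ} (S : Matrix (Fin d) (Fin d) ℝ)
    (Φ : ℕ → Ω → Fin d → ℝ) (n : ℕ) (ω : Ω) : Matrix (Fin d) (Fin d) ℝ :=
  S + ∑ k ∈ Finset.range (n + 1), vecMulVec (Φ k ω) (Φ k ω)

/-- The explosion coefficient `f_n = Φ_nᵗ S_n⁻¹ Φ_n`. -/
def expl {Ω : Type*} {d : ℕ} (S : Matrix (Fin d) (Fin d) ℝ)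
    (Φ : ℕ → Ω → Fin d → ℝ) (n : ℕ) (ω : Ω) : ℝ :=
  Φ n ω ⬝ᵥ ((Smat S Φ n ω)⁻¹ *ᵥ Φ n ω)

/-- The vector martingale transform `M_n = M_0 + ∑_{k=1}^n Φ_{k-1} ε_k`. -/
def Mart {Ω : Type*} {d : ℕ} (M0 : Ω → Fin d → ℝ) (Φ : ℕ → Ω → Fin d → ℝ)
    (ε : ℕ → Ω → ℝ) (n : ℕ) (ω : Ω) : Fin d → ℝ :=
  M0 ω + ∑ k ∈ Finset.range n, ε (k + 1) ω • Φ k ω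

/-- `ℓ(p) = d σ^{2p} ∏_{j=1}^{p-1} (d + 2j)`. -/
def elllim (d p : ℕ) (σ : ℝ) : ℝ :=
  (d : ℝ) * σ ^ (2 * p) * ∏ j ∈ Finset.Icc 1 (p - 1), ((d : ℝ) + 2 * (j : ℝ))

/-!
Besides `V n = M_nᵗ S_{n-1}⁻¹ M_n`, consider `W n = M_nᵗ L⁻¹ M_n / s n`, where `s n` is
`tr (L⁻¹ S_{n-1}) / d` up to an additive constant. Since `S_{n-1} / s n → L`, the two are
asymptotically equivalent; with `γ n = 1 - s n / s (n + 1)`, moreover, `f n ~ d * γ n` and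
`log d_n ~ d * ∑ γ`. Expand `W (n + 1) ^ p` and `V (n + 1) ^ p` in powers of the noise. By a strong
law for conditionally centered sequences, the terms of odd or higher order are negligible with
respect to `∑ γ`, so that both powers gain
`p * σ ^ 2 * (d * γ * W ^ (p - 1) + 2 * (p - 1) * b ^ 2 * W ^ (p - 2))` per step, `b` being the
cross term `Φ_nᵗ L⁻¹ M_n / s (n + 1)`. The losses differ: `p * γ * W ^ p` for `W`, but, by the
Sherman–Morrison formula, `p * b ^ 2 * W ^ (p - 1)` for `V`. Balancing gains and losses expresses
`∑ γ * W ^ p` and `∑ b ^ 2 * W ^ (p - 1)` by the same sums of order `p - 1`; by induction on `p`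
both grow like the same multiple of `∑ γ`, and passing from `p` to `p + 1` multiplies it by
`σ ^ 2 * (d + 2 * p)`.
-/

section ConditionallyCentered

variable {Ω : Type*} {m m0 : MeasurableSpace Ω} {μ : Measure Ω} {u v : Ω → ℝ}

/-- A martingale difference in the generalised sense: an `m`-measurable multiple of an integrable
variable with vanishing conditional expectation. The product itself need not be integrable, which
makes the notion stable under multiplication by arbitrary `m`-measurable weights. -/
def CondCentered (μ : Measure Ω) (m : MeasurableSpace Ω) (u : Ω → ℝ) : Prop :=
  ∃ h e : Ω → ℝ, Measurable[m] h ∧ Integrable e μ ∧ μ[e | m] =ᵐ[μ] 0 ∧ u =ᵐ[μ] h * e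

namespace CondCentered

lemma of_integrable (hu : Integrable u μ) (h0 : μ[u | m] =ᵐ[μ] 0) : CondCentered μ m u :=
  ⟨1, u, measurable_const, hu, h0, by simp⟩

lemma sub_condExp (hm : m ≤ m0) [SigmaFinite (μ.trim hm)] (hu : Integrable u μ) :
    CondCentered μ m (u - μ[u | m]) := by
  refine of_integrable (hu.sub integrable_condExp) ?_
  filter_upwards [condExp_sub hu (integrable_condExp (m := m) (f := u)) m] with ω hω
  rw [hω, Pi.sub_apply, condExp_of_stronglyMeasurable hm stronglyMeasurable_condExp
    integrable_condExp, sub_self, Pi.zero_apply]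

lemma congr (hu : CondCentered μ m u) (h : u =ᵐ[μ] v) : CondCentered μ m v := by
  obtain ⟨w, e, hw, he, he0, hue⟩ := hu
  exact ⟨w, e, hw, he, he0, h.symm.trans hue⟩

lemma mul_left {h : Ω → ℝ} (hh : Measurable[m] h) (hu : CondCentered μ m u) :
    CondCentered μ m (h * u) := by
  obtain ⟨w, e, hw, he, he0, hue⟩ := hu
  refine ⟨h * w, e, hh.mul hw, he, he0, ?_⟩
  filter_upwards [hue] with ω hω
  simp [hω, mul_assoc]

lemma indicator {s : Set Ω} (hs : MeasurableSet[m] s) (hu : CondCentered μ m u) :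
    CondCentered μ m (s.indicator u) :=
  (hu.mul_left (measurable_const.indicator hs (f := fun _ => (1 : ℝ)))).congr <| .of_forall
    fun ω => by by_cases hω : ω ∈ s <;> simp [hω]

lemma condExp_eq_zero (hu : CondCentered μ m u) (hint : Integrable u μ) : μ[u | m] =ᵐ[μ] 0 := by
  obtain ⟨h, e, hh, he, he0, hue⟩ := hu
  calc μ[u | m] =ᵐ[μ] μ[h * e | m] := condExp_congr_ae hue
    _ =ᵐ[μ] h * μ[e | m] :=
      condExp_mul_of_stronglyMeasurable_left hh.stronglyMeasurable (hint.congr hue) he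
    _ =ᵐ[μ] 0 := by filter_upwards [he0] with ω hω; simp [hω]

variable [IsFiniteMeasure μ]

/-- The common weight `1 + |h| + |h'|` makes both quotients `h / (1 + |h| + |h'|)` and
`h' / (1 + |h| + |h'|)` bounded. -/
lemma add (hm : m ≤ m0) (hu : CondCentered μ m u) (hv : CondCentered μ m v) :
    CondCentered μ m (u + v) := by
  obtain ⟨h, e, hh, he, he0, hue⟩ := hu
  obtain ⟨h', e', hh', he', he0', hve⟩ := hv
  let w : Ω → ℝ := fun ω => 1 + |h ω| + |h' ω|
  have hw : Measurable[m] w := by fun_prop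
  have hwpos : ∀ ω, 0 < w ω := fun ω => by positivity
  have bounded_ratio : ∀ k : Ω → ℝ, (∀ ω, |k ω| ≤ w ω) → ∀ᵐ ω ∂μ, ‖(k / w) ω‖ ≤ 1 :=
    fun k hk => .of_forall fun ω => by
      rw [Pi.div_apply, Real.norm_eq_abs, abs_div, abs_of_pos (hwpos ω)]
      exact div_le_one_of_le₀ (hk ω) (hwpos ω).le
  have ratio_mul_centered : ∀ k f : Ω → ℝ, Measurable[m] k → (∀ ω, |k ω| ≤ w ω) → Integrable f μ →
      μ[f | m] =ᵐ[μ] 0 → Integrable (k / w * f) μ ∧ μ[k / w * f | m] =ᵐ[μ] 0 := by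
    intro k f hk hkw hf hf0
    have hmeas : StronglyMeasurable[m] (k / w) := (hk.div hw).stronglyMeasurable
    refine ⟨hf.bdd_mul (hmeas.mono hm).aestronglyMeasurable (bounded_ratio k hkw), ?_⟩
    filter_upwards [condExp_stronglyMeasurable_mul_of_bound hm hmeas hf 1 (bounded_ratio k hkw),
      hf0] with ω h1 h2
    simp [h1, h2]
  obtain ⟨hint, hzero⟩ := ratio_mul_centered h e hh
    (fun ω => by dsimp only [w]; linarith [abs_nonneg (h' ω)]) he he0
  obtain ⟨hint', hzero'⟩ := ratio_mul_centered h' e' hh'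
    (fun ω => by dsimp only [w]; linarith [abs_nonneg (h ω)]) he' he0'
  refine ⟨w, h / w * e + h' / w * e', hw, hint.add hint', ?_, ?_⟩
  · filter_upwards [condExp_add hint hint' m, hzero, hzero'] with ω h1 h2 h3
    simp [h1, h2, h3]
  · filter_upwards [hue, hve] with ω h1 h2
    have := (hwpos ω).ne'
    simp only [Pi.add_apply, Pi.mul_apply, Pi.div_apply, h1, h2]
    field_simp

/-- On the sets `{|h| ≤ j} ∈ m`, which exhaust `Ω`, the integral of `h * e` vanishes. -/
lemma integrable_of_neg_le (hm : m ≤ m0) (hu : CondCentered μ m u) (hv : Integrable v μ)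
    (hle : -v ≤ᵐ[μ] u) : Integrable u μ := by
  obtain ⟨h, e, hh, he, he0, hue⟩ := hu
  let s : ℕ → Set Ω := fun j => {ω | |h ω| ≤ j}
  have hs : ∀ j, MeasurableSet[m] (s j) := fun j =>
    (measurable_norm.comp hh) measurableSet_Iic
  have hcover : AECover μ atTop s :=
    { ae_eventually_mem := .of_forall fun ω =>
        (eventually_ge_atTop ⌈|h ω|⌉₊).mono fun j hj => Nat.ceil_le.mp hj
      measurableSet := fun j => hm _ (hs j) }
  have h_on : ∀ j, IntegrableOn (h * e) (s j) μ ∧ ∫ ω in s j, (h * e) ω ∂μ = 0 := by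
    intro j
    let k : Ω → ℝ := (s j).indicator h
    have hk : StronglyMeasurable[m] k := (hh.indicator (hs j)).stronglyMeasurable
    have hkb : ∀ᵐ ω ∂μ, ‖k ω‖ ≤ j := .of_forall fun ω => by
      by_cases hω : ω ∈ s j
      · simpa only [k, Real.norm_eq_abs, Set.indicator_of_mem hω] using! hω
      · simp [k, hω]
    have hind : k * e = (s j).indicator (h * e) := by
      ext ω; by_cases hω : ω ∈ s j <;> simp [k, hω]
    have hint : Integrable (k * e) μ := he.bdd_mul (hk.mono hm).aestronglyMeasurable hkb
    refine ⟨(integrable_indicator_iff (hm _ (hs j))).mp (hind ▸ hint), ?_⟩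
    rw [← integral_indicator (hm _ (hs j)), ← hind, ← integral_condExp hm]
    refine integral_eq_zero_of_ae ?_
    filter_upwards [condExp_stronglyMeasurable_mul_of_bound hm hk he j hkb, he0] with ω h1 h2
    simp [h1, h2]
  have hsum : Integrable (h * e + v) μ := by
    refine hcover.integrable_of_integral_bounded_of_nonneg_ae (∫ ω, |v ω| ∂μ)
      (fun j => (h_on j).1.add hv.integrableOn) ?_ (.of_forall fun j => ?_)
    · filter_upwards [hle, hue] with ω h1 h2
      simp only [Pi.neg_apply, Pi.add_apply] at *
      linarith
    · rw [integral_add' (h_on j).1 hv.integrableOn, (h_on j).2, zero_add]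
      exact (integral_mono hv.integrableOn hv.abs.integrableOn fun ω => le_abs_self _).trans
        (setIntegral_le_integral hv.abs (.of_forall fun ω => abs_nonneg _))
  exact ((hsum.sub hv).congr (.of_forall fun ω => by simp)).congr hue.symm

end CondCentered

end ConditionallyCentered

section Convergence

variable {Ω : Type*} {m0 : MeasurableSpace Ω} {μ : Measure Ω} {F : Filtration ℕ m0}

lemma eLpNorm_one_le_of_neg_le [IsProbabilityMeasure μ] {f : Ω → ℝ} {K : ℝ} (hf : Integrable f μ)
    (hK : 0 ≤ K) (hle : ∀ᵐ ω ∂μ, -K ≤ f ω) :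
    eLpNorm f 1 μ ≤ ENNReal.ofReal (∫ ω, f ω ∂μ + 2 * K) := by
  rw [eLpNorm_one_eq_lintegral_enorm, ← ofReal_integral_norm_eq_lintegral_enorm hf]
  refine ENNReal.ofReal_le_ofReal ?_
  calc ∫ ω, ‖f ω‖ ∂μ ≤ ∫ ω, (f ω + 2 * K) ∂μ := by
        refine integral_mono_ae hf.norm (hf.add (integrable_const _)) ?_
        filter_upwards [hle] with ω hω
        exact abs_le.mpr ⟨by linarith, by linarith⟩
    _ = ∫ ω, f ω ∂μ + 2 * K := by
        rw [integral_add hf (integrable_const _)]; simp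

lemma ae_tendsto_of_condCentered_of_neg_const_le [IsProbabilityMeasure μ] {T : ℕ → Ω → ℝ} {K : ℝ}
    (hT : ∀ n, Measurable[F n] (T n)) (hT0 : ∀ ω, |T 0 ω| ≤ K)
    (hinc : ∀ n, CondCentered μ (F n) (T (n + 1) - T n)) (hle : ∀ n, ∀ᵐ ω ∂μ, -K ≤ T n ω) :
    ∀ᵐ ω ∂μ, ∃ c, Tendsto (fun n => T n ω) atTop (𝓝 c) := by
  have hint : ∀ n, Integrable (T n) μ ∧ Integrable (T (n + 1) - T n) μ := by
    have integrable_increment : ∀ n, Integrable (T n) μ → Integrable (T (n + 1) - T n) μ := by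
      intro n hn
      refine (hinc n).integrable_of_neg_le (F.le n) (hn.add (integrable_const K)) ?_
      filter_upwards [hle (n + 1)] with ω hω
      simp only [Pi.neg_apply, Pi.add_apply, Pi.sub_apply]
      linarith
    intro n
    induction n with
    | zero =>
      have h0 : Integrable (T 0) μ :=
        Integrable.of_bound ((hT 0).mono (F.le 0) le_rfl).aestronglyMeasurable K (.of_forall hT0)
      exact ⟨h0, integrable_increment 0 h0⟩
    | succ n ih =>
      have h1 : Integrable (T (n + 1)) μ := by simpa using ih.2.add ih.1
      exact ⟨h1, integrable_increment (n + 1) h1⟩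
  have hmart : Martingale T F μ :=
    martingale_of_condExp_sub_eq_zero_nat (fun n => (hT n).stronglyMeasurable)
      (fun n => (hint n).1) fun n => (hinc n).condExp_eq_zero (hint n).2
  have hK : 0 ≤ K := by
    obtain ⟨ω⟩ := (inferInstance : (ae μ).NeBot).nonempty
    exact (abs_nonneg _).trans (hT0 ω)
  refine hmart.submartingale.exists_ae_tendsto_of_bdd
    (R := (∫ ω, T 0 ω ∂μ + 2 * K).toNNReal) fun n => ?_
  have hconst : ∫ ω, T n ω ∂μ = ∫ ω, T 0 ω ∂μ := by
    simpa using (hmart.setIntegral_eq (Nat.zero_le n) MeasurableSet.univ).symm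
  simpa [ENNReal.ofReal, hconst] using eLpNorm_one_le_of_neg_le (hint n).1 hK (hle n)

/-- The process `N` frozen as soon as it leaves the decreasing sequence of events `G`: its `n`-th
increment is kept on `G (n + 1)` only. -/
def frozen (G : ℕ → Set Ω) (N : ℕ → Ω → ℝ) (n : ℕ) (ω : Ω) : ℝ :=
  (G 0).indicator (N 0) ω + ∑ k ∈ range n, (G (k + 1)).indicator (N (k + 1) - N k) ω

lemma frozen_succ_sub (G : ℕ → Set Ω) (N : ℕ → Ω → ℝ) (n : ℕ) :
    frozen G N (n + 1) - frozen G N n = (G (n + 1)).indicator (N (n + 1) - N n) := by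
  ext ω; simp only [frozen, sum_range_succ, Pi.sub_apply]; abel

lemma frozen_eq_of_mem {G : ℕ → Set Ω} (hG : Antitone G) (N : ℕ → Ω → ℝ) {n : ℕ} {ω : Ω}
    (hω : ω ∈ G n) : frozen G N n ω = N n ω := by
  have : ∀ k ∈ range n, (G (k + 1)).indicator (N (k + 1) - N k) ω = N (k + 1) ω - N k ω :=
    fun k hk => Set.indicator_of_mem (hG (mem_range.mp hk) hω) _
  simp only [frozen, sum_congr rfl this, sum_range_sub (N · ω),
    Set.indicator_of_mem (hG n.zero_le hω)]
  ring

lemma measurable_frozen {G : ℕ → Set Ω} {N : ℕ → Ω → ℝ} (hG0 : MeasurableSet[F 0] (G 0))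
    (hG : ∀ n, MeasurableSet[F n] (G (n + 1))) (hN : ∀ n, Measurable[F n] (N n)) (n : ℕ) :
    Measurable[F n] (frozen G N n) := by
  have hN' : ∀ k ≤ n, Measurable[F n] (N k) := fun k hk => (hN k).mono (F.mono hk) le_rfl
  refine Measurable.add ((hN' 0 n.zero_le).indicator (F.mono n.zero_le _ hG0)) ?_
  refine Finset.measurable_sum _ fun k hk => ?_
  have hk : k < n := mem_range.mp hk
  exact ((hN' (k + 1) hk).sub (hN' k hk.le)).indicator (F.mono hk.le _ (hG k))

lemma neg_le_frozen {G : ℕ → Set Ω} (hG : Antitone G) {N : ℕ → Ω → ℝ} {K : ℝ} {ω : Ω}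
    (hK : 0 ≤ K) (h0 : ω ∈ G 0 → -K ≤ N 0 ω) (hle : ∀ n, ω ∈ G (n + 1) → -K ≤ N (n + 1) ω)
    (n : ℕ) : -K ≤ frozen G N n ω := by
  induction n with
  | zero =>
    by_cases hω : ω ∈ G 0
    · exact (frozen_eq_of_mem hG N hω).symm ▸ h0 hω
    · simpa [frozen, Set.indicator_of_notMem hω] using hK
  | succ n ih =>
    by_cases hω : ω ∈ G (n + 1)
    · exact (frozen_eq_of_mem hG N hω).symm ▸ hle n hω
    · have := congrFun (frozen_succ_sub G N n) ω
      rw [Pi.sub_apply, Set.indicator_of_notMem hω] at this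
      linarith

/-- The process is frozen at the predictable time when the lower bound `b` first exceeds `K`. -/
theorem ae_tendsto_of_condCentered_of_neg_le [IsProbabilityMeasure μ] {N b : ℕ → Ω → ℝ}
    (hN : ∀ n, Measurable[F n] (N n)) (hb : ∀ n, Measurable[F n] (b n))
    (hinc : ∀ n, CondCentered μ (F n) (N (n + 1) - N n))
    (hle : ∀ n, ∀ᵐ ω ∂μ, -b n ω ≤ N (n + 1) ω) (hbdd : ∀ᵐ ω ∂μ, ∃ K, ∀ n, b n ω ≤ K) :
    ∀ᵐ ω ∂μ, ∃ c, Tendsto (fun n => N n ω) atTop (𝓝 c) := by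
  let G : ℕ → ℕ → Set Ω := fun K n => {ω | |N 0 ω| ≤ K} ∩ ⋂ k ∈ Set.Iio n, {ω | b k ω ≤ K}
  have hG_anti : ∀ K, Antitone (G K) := fun K i j hij =>
    Set.inter_subset_inter_right _ (Set.biInter_subset_biInter_left (Set.Iio_subset_Iio hij))
  have hG : ∀ K n i, n ≤ i + 1 → MeasurableSet[F i] (G K n) := fun K n i hi => by
    refine MeasurableSet.inter ?_ (.iInter fun k => .iInter fun hk => ?_)
    · exact (measurable_norm.comp ((hN 0).mono (F.mono i.zero_le) le_rfl)) measurableSet_Iic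
    · have hk : k < n := hk
      exact ((hb k).mono (F.mono (by omega)) le_rfl) measurableSet_Iic
  have hb_le : ∀ K n, ∀ ω ∈ G K (n + 1), b n ω ≤ K := fun K n ω hω =>
    Set.mem_iInter₂.mp hω.2 n n.lt_succ_self
  have hconv : ∀ᵐ ω ∂μ, ∀ K : ℕ, ∃ c, Tendsto (fun n => frozen (G K) N n ω) atTop (𝓝 c) := by
    refine ae_all_iff.mpr fun K => ae_tendsto_of_condCentered_of_neg_const_le (K := K)
      (measurable_frozen (hG K 0 0 zero_le_one) (fun n => hG K (n + 1) n le_rfl) hN)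
      (fun ω => ?_) (fun n => ?_) fun n => ?_
    · by_cases hω : ω ∈ G K 0
      · exact (frozen_eq_of_mem (hG_anti K) N hω).symm ▸ hω.1
      · simp [frozen, Set.indicator_of_notMem hω]
    · exact frozen_succ_sub (G K) N n ▸ (hinc n).indicator (hG K (n + 1) n le_rfl)
    · filter_upwards [ae_all_iff.mpr hle] with ω hω
      exact neg_le_frozen (hG_anti K) K.cast_nonneg (fun h => (abs_le.mp h.1).1)
        (fun n h => (neg_le_neg (hb_le K n ω h)).trans (hω n)) n
  filter_upwards [hconv, hbdd] with ω hω ⟨B, hB⟩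
  obtain ⟨K, hK⟩ := exists_nat_ge (max |N 0 ω| B)
  obtain ⟨c, hc⟩ := hω K
  exact ⟨c, hc.congr fun n => frozen_eq_of_mem (hG_anti K) N
    ⟨(le_max_left _ _).trans hK,
      Set.mem_iInter₂.mpr fun k _ => (hB k).trans ((le_max_right _ _).trans hK)⟩⟩

theorem robbins_siegmund [IsProbabilityMeasure μ] {Y D B u : ℕ → Ω → ℝ}
    (hY0 : Measurable[F 0] (Y 0)) (hB : ∀ n, Measurable[F n] (B n))
    (hu : ∀ n, Measurable[F (n + 1)] (u n)) (hcent : ∀ n, CondCentered μ (F n) (u n))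
    (hY : ∀ n ω, 0 ≤ Y n ω) (hD : ∀ n ω, 0 ≤ D n ω)
    (hrec : ∀ n, ∀ᵐ ω ∂μ, Y (n + 1) ω + D n ω ≤ Y n ω + B n ω + u n ω)
    (hsum : ∀ᵐ ω ∂μ, Summable fun n => B n ω) :
    ∀ᵐ ω ∂μ, (∃ K, ∀ n, Y n ω ≤ K) ∧ Summable fun n => D n ω := by
  let N : ℕ → Ω → ℝ := fun n ω => ∑ k ∈ range n, u k ω
  let b : ℕ → Ω → ℝ := fun n ω => Y 0 ω + ∑ k ∈ range (n + 1), B k ω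
  have htotal : ∀ᵐ ω ∂μ, ∀ n, Y n ω + ∑ k ∈ range n, D k ω ≤
      Y 0 ω + ∑ k ∈ range n, B k ω + N n ω := by
    filter_upwards [ae_all_iff.mpr hrec] with ω hω n
    induction n with
    | zero => simp [N]
    | succ n ih => simp only [N, sum_range_succ] at ih ⊢; linarith [hω n]
  have hsum_bdd : ∀ᵐ ω ∂μ, ∃ K, ∀ n, ∑ k ∈ range n, B k ω ≤ K := by
    filter_upwards [hsum] with ω hω
    exact hω.hasSum.tendsto_sum_nat.bddAbove_range.imp fun K hK n => hK ⟨n, rfl⟩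
  have hconv : ∀ᵐ ω ∂μ, ∃ c, Tendsto (fun n => N n ω) atTop (𝓝 c) := by
    refine ae_tendsto_of_condCentered_of_neg_le (F := F) (b := b) (fun n => ?_) (fun n => ?_)
      (fun n => (hcent n).congr (.of_forall fun ω => by simp [N, sum_range_succ])) (fun n => ?_) ?_
    · exact Finset.measurable_fun_sum _ fun k hk =>
        (hu k).mono (F.mono (mem_range.mp hk)) le_rfl
    · refine (hY0.mono (F.mono n.zero_le) le_rfl).add (Finset.measurable_fun_sum _ fun k hk => ?_)
      exact (hB k).mono (F.mono (Nat.lt_succ_iff.mp (mem_range.mp hk))) le_rfl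
    · filter_upwards [htotal] with ω hω
      simp only [b]
      linarith [hω (n + 1), hY (n + 1) ω, sum_nonneg fun k (_ : k ∈ range (n + 1)) => hD k ω]
    · filter_upwards [hsum_bdd] with ω ⟨K, hK⟩
      exact ⟨Y 0 ω + K, fun n => by simp only [b]; linarith [hK (n + 1)]⟩
  filter_upwards [htotal, hsum_bdd, hconv] with ω hω ⟨K, hK⟩ ⟨c, hc⟩
  obtain ⟨K', hK'⟩ := hc.bddAbove_range
  have hN : ∀ n, N n ω ≤ K' := fun n => hK' ⟨n, rfl⟩
  have hDsum : ∀ n, 0 ≤ ∑ k ∈ range n, D k ω := fun n => sum_nonneg fun k _ => hD k ω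
  refine ⟨⟨Y 0 ω + K + K', fun n => by linarith [hω n, hK n, hN n, hDsum n]⟩,
    summable_of_sum_range_le (c := Y 0 ω + K + K') (fun n => hD n ω) fun n => ?_⟩
  linarith [hω n, hK n, hN n, hY n ω]

end Convergence

section StrongLaw

variable {Ω : Type*} {m0 : MeasurableSpace Ω} {μ : Measure Ω} {F : Filtration ℕ m0}

lemma abs_one_add_rpow_le {s : ℝ} (h1 : 1 ≤ s) (h2 : s ≤ 2) (t : ℝ) :
    |1 + t| ^ s ≤ 1 + s * t + 6 * |t| ^ s := by
  have h0 : 0 ≤ |t| ^ s := by positivity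
  rcases le_or_gt |t| 1 with ht | ht
  · have hl : -1 ≤ t := (abs_le.mp ht).1
    have hsq : t ^ 2 ≤ |t| ^ s := by
      rw [← sq_abs, ← Real.rpow_natCast]
      exact Real.rpow_le_rpow_of_exponent_ge_of_imp (abs_nonneg t) ht (mod_cast h2) (by norm_num)
    calc |1 + t| ^ s = (1 + t) * (1 + t) ^ (s - 1) := by
          rw [abs_of_nonneg (by linarith), ← Real.rpow_one_add' (by linarith) (by linarith)]
          ring_nf
      _ ≤ (1 + t) * (1 + (s - 1) * t) := by
          gcongr
          · linarith
          · exact rpow_one_add_le_one_add_mul_self hl (by linarith) (by linarith)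
      _ ≤ 1 + s * t + 6 * |t| ^ s := by nlinarith [sq_nonneg t]
  · have hquad : |1 + t| ^ s ≤ 4 * |t| ^ s :=
      calc |1 + t| ^ s ≤ (2 * |t|) ^ s := by
            gcongr
            exact (abs_add_le _ _).trans (by rw [abs_one]; linarith)
        _ ≤ 2 ^ (2 : ℝ) * |t| ^ s := by
            rw [Real.mul_rpow two_pos.le (abs_nonneg t)]
            gcongr
            exact one_le_two
        _ = 4 * |t| ^ s := by norm_num
    have hlin : |t| ≤ |t| ^ s := Real.self_le_rpow_of_one_le ht.le h1
    nlinarith [neg_abs_le t, abs_nonneg t]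

lemma abs_add_rpow_le {s : ℝ} (h1 : 1 ≤ s) (h2 : s ≤ 2) (x y : ℝ) :
    |x + y| ^ s ≤ |x| ^ s + s * (|x| ^ s * x⁻¹) * y + 6 * |y| ^ s := by
  rcases eq_or_ne x 0 with rfl | hx
  · have hs : s ≠ 0 := by linarith
    have hy : 0 ≤ |y| ^ s := by positivity
    simpa [Real.zero_rpow hs] using le_mul_of_one_le_left hy (by norm_num)
  · calc |x + y| ^ s = |x| ^ s * |1 + y / x| ^ s := by
          rw [← Real.mul_rpow (abs_nonneg _) (abs_nonneg _), ← abs_mul]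
          congr 2
          field_simp
      _ ≤ |x| ^ s * (1 + s * (y / x) + 6 * |y / x| ^ s) := by
          gcongr
          exact abs_one_add_rpow_le h1 h2 _
      _ = |x| ^ s + s * (|x| ^ s * x⁻¹) * y + 6 * |y| ^ s := by
          rw [abs_div, Real.div_rpow (abs_nonneg _) (abs_nonneg _)]
          field_simp

/-- The conditional expectations `E[q n | F n]` are almost surely bounded in `n`. They are encoded
by an adapted upper bound `κ` of `q` up to a `CondCentered` term, so that `q n` need not be
integrable. -/
def CondBounded (μ : Measure Ω) (F : Filtration ℕ m0) (q : ℕ → Ω → ℝ) : Prop :=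
  ∃ κ ζ : ℕ → Ω → ℝ, (∀ n, Measurable[F n] (κ n)) ∧ (∀ n, Measurable[F (n + 1)] (ζ n)) ∧
    (∀ n, CondCentered μ (F n) (ζ n)) ∧ (∀ n, q n ≤ᵐ[μ] κ n + ζ n) ∧ (∀ n ω, 0 ≤ κ n ω) ∧
    ∀ᵐ ω ∂μ, ∃ K, ∀ n, κ n ω ≤ K

lemma CondBounded.of_condExp [IsFiniteMeasure μ] {q : ℕ → Ω → ℝ}
    (hmeas : ∀ n, Measurable[F (n + 1)] (q n))
    (hint : ∀ n, Integrable (q n) μ) (hbdd : ∀ᵐ ω ∂μ, ∃ K, ∀ n, (μ[q n | F n]) ω ≤ K) :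
    CondBounded μ F q := by
  have hE : ∀ n, Measurable[F n] (μ[q n | F n]) := fun n => stronglyMeasurable_condExp.measurable
  refine ⟨fun n ω => max ((μ[q n | F n]) ω) 0, fun n => q n - μ[q n | F n],
    fun n => (hE n).max measurable_const,
    fun n => (hmeas n).sub ((hE n).mono (F.mono n.le_succ) le_rfl),
    fun n => .sub_condExp (F.le n) (hint n), fun n => .of_forall fun ω => ?_,
    fun n ω => le_max_right _ _, ?_⟩
  · simp only [Pi.add_apply, Pi.sub_apply]
    linarith [le_max_left ((μ[q n | F n]) ω) 0]
  · filter_upwards [hbdd] with ω ⟨K, hK⟩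
    exact ⟨max K 0, fun n => max_le_max_right 0 (hK n)⟩

lemma CondBounded.of_le_mul_add {q q' κ' : ℕ → Ω → ℝ} (hq : CondBounded μ F q) {c : ℝ}
    (hc : 0 ≤ c) (hκ' : ∀ n, Measurable[F n] (κ' n)) (hκ'0 : ∀ n ω, 0 ≤ κ' n ω)
    (hκ'b : ∀ᵐ ω ∂μ, ∃ K, ∀ n, κ' n ω ≤ K)
    (hle : ∀ n, ∀ᵐ ω ∂μ, q' n ω ≤ c * q n ω + κ' n ω) : CondBounded μ F q' := by
  obtain ⟨κ, ζ, hκ, hζ, hcent, hqle, hκ0, hκb⟩ := hq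
  refine ⟨fun n ω => c * κ n ω + κ' n ω, fun n ω => c * ζ n ω,
    fun n => ((hκ n).const_mul c).add (hκ' n), fun n => (hζ n).const_mul c,
    fun n => (hcent n).mul_left measurable_const, fun n => ?_,
    fun n ω => add_nonneg (mul_nonneg hc (hκ0 n ω)) (hκ'0 n ω), ?_⟩
  · filter_upwards [hqle n, hle n] with ω h1 h2
    simp only [Pi.add_apply] at h1 ⊢
    linarith [mul_le_mul_of_nonneg_left h1 hc]
  · filter_upwards [hκb, hκ'b] with ω ⟨K, hK⟩ ⟨K', hK'⟩
    exact ⟨c * K + K', fun n => add_le_add (mul_le_mul_of_nonneg_left (hK n) hc) (hK' n)⟩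

/-- The right-hand side is arranged as for `robbins_siegmund`: the previous value, a predictable
term and a `CondCentered` term, once `κ + ζ` comes from `CondBounded`. -/
lemma abs_add_mul_rpow_div_le {s N x η κ ζ v v' : ℝ} (h1 : 1 ≤ s) (h2 : s ≤ 2) (hv : 0 < v)
    (hvv' : v ≤ v') (hη : |η| ^ s ≤ κ + ζ) :
    |N + x * η| ^ s / v' ≤ |N| ^ s / v + 6 * (|x| ^ s / v) * κ +
      (s * (|N| ^ s * N⁻¹) * x / v * η + 6 * (|x| ^ s / v) * ζ) :=
  calc |N + x * η| ^ s / v' ≤ |N + x * η| ^ s / v := by gcongr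
    _ ≤ (|N| ^ s + s * (|N| ^ s * N⁻¹) * (x * η) + 6 * (|x| ^ s * (κ + ζ))) / v := by
        gcongr
        refine (abs_add_rpow_le h1 h2 _ _).trans ?_
        rw [abs_mul, Real.mul_rpow (abs_nonneg _) (abs_nonneg _)]
        gcongr
    _ = _ := by ring

theorem ae_abs_sum_rpow_le [IsProbabilityMeasure μ] {s : ℝ} (h1 : 1 ≤ s) (h2 : s ≤ 2)
    {X η v : ℕ → Ω → ℝ} (hX : ∀ n, Measurable[F n] (X n)) (hη : ∀ n, Measurable[F (n + 1)] (η n))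
    (hv : ∀ n, Measurable[F n] (v n)) (hcent : ∀ n, CondCentered μ (F n) (η n))
    (hbdd : CondBounded μ F fun n ω => |η n ω| ^ s) (hv0 : ∀ n ω, 0 < v n ω)
    (hv_mono : ∀ ω, Monotone (v · ω)) (hsum : ∀ᵐ ω ∂μ, Summable fun n => |X n ω| ^ s / v n ω) :
    ∀ᵐ ω ∂μ, ∃ K, ∀ n, |∑ k ∈ range n, X k ω * η k ω| ^ s ≤ K * v n ω := by
  obtain ⟨κ, ζ, hκ, hζ, hζcent, hle, hκ0, hκb⟩ := hbdd
  let N : ℕ → Ω → ℝ := fun n ω => ∑ k ∈ range n, X k ω * η k ω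
  have hN : ∀ n, Measurable[F n] (N n) := fun n => Finset.measurable_fun_sum _ fun k hk =>
    ((hX k).mono (F.mono (mem_range.mp hk).le) le_rfl).mul
      ((hη k).mono (F.mono (mem_range.mp hk)) le_rfl)
  let w : ℕ → Ω → ℝ := fun n ω => s * (|N n ω| ^ s * (N n ω)⁻¹) * X n ω / v n ω
  let w' : ℕ → Ω → ℝ := fun n ω => 6 * (|X n ω| ^ s / v n ω)
  have hw : ∀ n, Measurable[F n] (w n) := fun n => by
    have := hN n; have := hX n; have := hv n; fun_prop
  have hw' : ∀ n, Measurable[F n] (w' n) := fun n => by have := hX n; have := hv n; fun_prop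
  have hw'0 : ∀ n ω, 0 ≤ w' n ω := fun n ω => by have := hv0 n ω; positivity
  have hbounded := robbins_siegmund (μ := μ) (F := F) (Y := fun n ω => |N n ω| ^ s / v n ω)
    (D := 0) (B := fun n => w' n * κ n) (u := fun n => w n * η n + w' n * ζ n)
    (by have := hN 0; have := hv 0; fun_prop) (fun n => (hw' n).mul (hκ n))
    (fun n => (((hw n).mono (F.mono n.le_succ) le_rfl).mul (hη n)).add
      (((hw' n).mono (F.mono n.le_succ) le_rfl).mul (hζ n)))
    (fun n => ((hcent n).mul_left (hw n)).add (F.le n) ((hζcent n).mul_left (hw' n)))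
    (fun n ω => by have := hv0 n ω; positivity) (fun _ _ => le_rfl) (fun n => ?_) ?_
  · filter_upwards [hbounded] with ω ⟨⟨K, hK⟩, _⟩
    exact ⟨K, fun n => (div_le_iff₀ (hv0 n ω)).mp (hK n)⟩
  · filter_upwards [hle n] with ω hω
    have hNs : N (n + 1) ω = N n ω + X n ω * η n ω := sum_range_succ ..
    simp only [Pi.add_apply, Pi.mul_apply, Pi.zero_apply, add_zero, hNs]
    exact abs_add_mul_rpow_div_le h1 h2 (hv0 n ω) (hv_mono ω n.le_succ) hω
  · filter_upwards [hsum, hκb] with ω hs ⟨K, hK⟩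
    refine Summable.of_nonneg_of_le (fun n => mul_nonneg (hw'0 n ω) (hκ0 n ω)) (fun n => ?_)
      ((hs.mul_left 6).mul_right K)
    exact mul_le_mul_of_nonneg_left (hK n) (hw'0 n ω)

end StrongLaw

section Noise

variable {Ω : Type*} {m0 : MeasurableSpace Ω} {μ : Measure Ω} {F : Filtration ℕ m0}
  {ξ : ℕ → Ω → ℝ} {σ a : ℝ}

/-- Martingale differences `ξ n` (measurable at time `n + 1`) with conditional variance `σ ^ 2` and
almost surely bounded conditional absolute moments of order `a`. -/
structure IsMomentNoise (μ : Measure Ω) (F : Filtration ℕ m0) (ξ : ℕ → Ω → ℝ) (σ a : ℝ) :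
    Prop where
  measurable : ∀ n, Measurable[F (n + 1)] (ξ n)
  integrable : ∀ n, Integrable (ξ n) μ
  condExp_eq_zero : ∀ n, μ[ξ n | F n] =ᵐ[μ] 0
  condExp_sq : ∀ n, μ[fun ω => ξ n ω ^ 2 | F n] =ᵐ[μ] fun _ => σ ^ 2
  integrable_rpow : ∀ n, Integrable (fun ω => |ξ n ω| ^ a) μ
  condExp_rpow_le : ∀ᵐ ω ∂μ, ∃ C, ∀ n, (μ[fun ω => |ξ n ω| ^ a | F n]) ω ≤ C

/-- The absolute power `|ξ n| ^ r` minus its conditional expectation. -/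
def compensatedPow (μ : Measure Ω) (F : Filtration ℕ m0) (ξ : ℕ → Ω → ℝ) (r n : ℕ) : Ω → ℝ :=
  (fun ω => |ξ n ω| ^ r) - μ[fun ω => |ξ n ω| ^ r | F n]

lemma rpow_le_one_add_rpow {x r a : ℝ} (hx : 0 ≤ x) (hr : 0 ≤ r) (hra : r ≤ a) :
    x ^ r ≤ 1 + x ^ a := by
  rcases le_total x 1 with h | h
  · linarith [Real.rpow_le_one hx h hr, Real.rpow_nonneg hx a]
  · linarith [Real.rpow_le_rpow_of_exponent_le h hra]

lemma pow_le_one_add_rpow {x a : ℝ} {r : ℕ} (hx : 0 ≤ x) (hra : r ≤ a) : x ^ r ≤ 1 + x ^ a := by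
  simpa using rpow_le_one_add_rpow hx r.cast_nonneg hra

lemma add_rpow_le_four_mul {x y s : ℝ} (hx : 0 ≤ x) (hy : 0 ≤ y) (h1 : 1 ≤ s) (h2 : s ≤ 2) :
    (x + y) ^ s ≤ 4 * (x ^ s + y ^ s) := by
  wlog hxy : x ≤ y generalizing x y
  · simpa [add_comm] using this hy hx (le_of_not_ge hxy)
  calc (x + y) ^ s ≤ (2 * y) ^ s := by gcongr; linarith
    _ ≤ 2 ^ (2 : ℝ) * y ^ s := by
        rw [Real.mul_rpow two_pos.le hy]
        gcongr
        exact one_le_two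
    _ ≤ 4 * (x ^ s + y ^ s) := by
        have : 0 ≤ x ^ s := by positivity
        norm_num
        linarith

lemma condExp_abs_pow_nonneg (ξ : ℕ → Ω → ℝ) (r : ℕ) :
    ∀ᵐ ω ∂μ, ∀ n, 0 ≤ (μ[fun ω => |ξ n ω| ^ r | F n]) ω :=
  ae_all_iff.mpr fun _ => condExp_nonneg (.of_forall fun _ => by positivity)

namespace IsMomentNoise

lemma condCentered (h : IsMomentNoise μ F ξ σ a) (n : ℕ) : CondCentered μ (F n) (ξ n) :=
  .of_integrable (h.integrable n) (h.condExp_eq_zero n)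

lemma measurable_compensatedPow (h : IsMomentNoise μ F ξ σ a) (r n : ℕ) :
    Measurable[F (n + 1)] (compensatedPow μ F ξ r n) := by
  have hξ := h.measurable n
  have hE : Measurable[F (n + 1)] (μ[fun ω => |ξ n ω| ^ r | F n]) :=
    stronglyMeasurable_condExp.measurable.mono (F.mono n.le_succ) le_rfl
  exact Measurable.sub (by fun_prop) hE

variable [IsProbabilityMeasure μ]

lemma condBounded_rpow (h : IsMomentNoise μ F ξ σ a) :
    CondBounded μ F fun n ω => |ξ n ω| ^ a :=
  .of_condExp (fun n => by have := h.measurable n; fun_prop) h.integrable_rpow h.condExp_rpow_le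

lemma integrable_pow (h : IsMomentNoise μ F ξ σ a) {r : ℕ} (hr : r ≤ a) (n : ℕ) :
    Integrable (fun ω => |ξ n ω| ^ r) μ := by
  have hξ : Measurable (ξ n) := (h.measurable n).mono (F.le _) le_rfl
  refine ((integrable_const 1).add (h.integrable_rpow n)).mono' (by fun_prop)
    (.of_forall fun ω => ?_)
  rw [Real.norm_of_nonneg (by positivity)]
  exact pow_le_one_add_rpow (abs_nonneg _) hr

lemma condBounded_pow (h : IsMomentNoise μ F ξ σ a) {r : ℕ} (hr : r ≤ a) :
    CondBounded μ F fun n ω => |ξ n ω| ^ r := by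
  refine h.condBounded_rpow.of_le_mul_add zero_le_one (κ' := fun _ _ => 1)
    (fun n => measurable_const) (fun _ _ => zero_le_one) (.of_forall fun _ => ⟨1, fun _ => le_rfl⟩)
    fun n => .of_forall fun ω => ?_
  rw [one_mul, add_comm]
  exact pow_le_one_add_rpow (abs_nonneg _) hr

lemma condExp_pow_le (h : IsMomentNoise μ F ξ σ a) {r : ℕ} (hr : r ≤ a) :
    ∀ᵐ ω ∂μ, ∃ C, ∀ n, (μ[fun ω => |ξ n ω| ^ r | F n]) ω ≤ C := by
  have hmono : ∀ n, ∀ᵐ ω ∂μ, (μ[fun ω => |ξ n ω| ^ r | F n]) ω ≤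
      1 + (μ[fun ω => |ξ n ω| ^ a | F n]) ω := fun n => by
    filter_upwards [condExp_mono (m := F n) (h.integrable_pow hr n)
        ((integrable_const 1).add (h.integrable_rpow n))
        (.of_forall fun ω => pow_le_one_add_rpow (abs_nonneg (ξ n ω)) hr),
      condExp_add (integrable_const 1) (h.integrable_rpow n) (F n)] with ω h1 h2
    rw [h2, Pi.add_apply, condExp_const (F.le n)] at h1
    exact h1
  filter_upwards [ae_all_iff.mpr hmono, h.condExp_rpow_le] with ω hω ⟨C, hC⟩
  exact ⟨1 + C, fun n => (hω n).trans (by linarith [hC n])⟩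

lemma condCentered_compensatedPow (h : IsMomentNoise μ F ξ σ a) {r : ℕ} (hr : r ≤ a) (n : ℕ) :
    CondCentered μ (F n) (compensatedPow μ F ξ r n) :=
  .sub_condExp (F.le n) (h.integrable_pow hr n)

lemma condBounded_compensatedPow (h : IsMomentNoise μ F ξ σ a) {r : ℕ} {s : ℝ} (h1 : 1 ≤ s)
    (h2 : s ≤ 2) (hr : r * s ≤ a) :
    CondBounded μ F fun n ω => |compensatedPow μ F ξ r n ω| ^ s := by
  have hra : r ≤ a := (le_mul_of_one_le_right r.cast_nonneg h1).trans hr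
  refine h.condBounded_rpow.of_le_mul_add (c := 4) (by norm_num)
    (κ' := fun n ω => 4 * (1 + |(μ[fun ω => |ξ n ω| ^ r | F n]) ω| ^ s)) (fun n => ?_)
    (fun n ω => by positivity) ?_ fun n => .of_forall fun ω => ?_
  · have : Measurable[F n] (μ[fun ω => |ξ n ω| ^ r | F n]) := stronglyMeasurable_condExp.measurable
    fun_prop
  · filter_upwards [condExp_abs_pow_nonneg (F := F) ξ r, h.condExp_pow_le hra] with ω hω ⟨C, hC⟩
    refine ⟨4 * (1 + C ^ s), fun n => ?_⟩
    rw [abs_of_nonneg (hω n)]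
    have := hω n
    gcongr
    exact hC n
  · set E := (μ[fun ω => |ξ n ω| ^ r | F n]) ω
    calc |compensatedPow μ F ξ r n ω| ^ s ≤ (|ξ n ω| ^ r + |E|) ^ s := by
          gcongr
          exact (abs_sub (|ξ n ω| ^ r) E).trans_eq (by rw [abs_of_nonneg (by positivity)])
      _ ≤ 4 * ((|ξ n ω| ^ r) ^ s + |E| ^ s) :=
          add_rpow_le_four_mul (by positivity) (abs_nonneg E) h1 h2
      _ ≤ 4 * (1 + |ξ n ω| ^ a + |E| ^ s) := by
          gcongr
          rw [← Real.rpow_natCast_mul (abs_nonneg _)]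
          exact rpow_le_one_add_rpow (abs_nonneg _) (by positivity) hr
      _ = 4 * |ξ n ω| ^ a + 4 * (1 + |E| ^ s) := by ring

end IsMomentNoise

/-- An adapted normalising sequence, at least `1`, nondecreasing, and tending to infinity almost
surely. -/
structure IsClock (μ : Measure Ω) (F : Filtration ℕ m0) (τ : ℕ → Ω → ℝ) : Prop where
  measurable : ∀ n, Measurable[F n] (τ n)
  one_le : ∀ n ω, 1 ≤ τ n ω
  monotone : ∀ ω, Monotone (τ · ω)
  tendsto : ∀ᵐ ω ∂μ, Tendsto (τ · ω) atTop atTop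

lemma IsClock.pos {τ : ℕ → Ω → ℝ} (h : IsClock μ F τ) (n : ℕ) (ω : Ω) : 0 < τ n ω :=
  one_pos.trans_le (h.one_le n ω)

lemma isLittleO_of_abs_rpow_le {N t : ℕ → ℝ} {s θ K : ℝ} (hs : 0 < s) (hθ : θ < s)
    (ht0 : ∀ n, 0 < t n) (ht : Tendsto t atTop atTop) (hN : ∀ n, |N n| ^ s ≤ K * t n ^ θ) :
    N =o[atTop] t := by
  have hK : 0 ≤ K := by
    have := (Real.rpow_nonneg (abs_nonneg (N 0)) s).trans (hN 0)
    exact nonneg_of_mul_nonneg_left this (Real.rpow_pos_of_pos (ht0 0) θ)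
  have hO : N =O[atTop] fun n => t n ^ (θ / s) := by
    refine Asymptotics.IsBigO.of_bound (K ^ s⁻¹) (.of_forall fun n => ?_)
    have htn := ht0 n
    rw [Real.norm_eq_abs, Real.norm_of_nonneg (by positivity), div_eq_mul_inv,
      Real.rpow_mul htn.le, ← Real.mul_rpow hK (by positivity)]
    exact (Real.le_rpow_inv_iff_of_pos (abs_nonneg _) (by positivity) hs).mpr (hN n)
  refine hO.trans_isLittleO
    (Asymptotics.isLittleO_of_tendsto (fun n h => absurd h (ht0 n).ne') ?_)
  refine ((tendsto_rpow_neg_atTop (sub_pos.mpr ((div_lt_one hs).mpr hθ))).comp ht).congr fun n => ?_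
  rw [Function.comp_apply, neg_sub, Real.rpow_sub_one (ht0 n).ne']

theorem ae_isLittleO_sum_mul [IsProbabilityMeasure μ] {s θ : ℝ} (h1 : 1 ≤ s) (h2 : s ≤ 2)
    (hθ : 0 ≤ θ) (hθs : θ < s) {X η τ : ℕ → Ω → ℝ} (hτ : IsClock μ F τ)
    (hX : ∀ n, Measurable[F n] (X n)) (hη : ∀ n, Measurable[F (n + 1)] (η n))
    (hcent : ∀ n, CondCentered μ (F n) (η n)) (hbdd : CondBounded μ F fun n ω => |η n ω| ^ s)
    (hsum : ∀ᵐ ω ∂μ, Summable fun n => |X n ω| ^ s / τ n ω ^ θ) :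
    ∀ᵐ ω ∂μ, (fun n => ∑ k ∈ range n, X k ω * η k ω) =o[atTop] (τ · ω) := by
  have hslln := ae_abs_sum_rpow_le (v := fun n ω => τ n ω ^ θ) h1 h2 hX hη
    (fun n => by have := hτ.measurable n; fun_prop) hcent hbdd
    (fun n ω => Real.rpow_pos_of_pos (hτ.pos n ω) θ)
    (fun ω i j hij => Real.rpow_le_rpow (hτ.pos i ω).le (hτ.monotone ω hij) hθ) hsum
  filter_upwards [hslln, hτ.tendsto] with ω ⟨K, hK⟩ hω
  exact isLittleO_of_abs_rpow_le (by linarith) hθs (hτ.pos · ω) hω hK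

end Noise

section PowerExpansion

/-- Coefficient of `ξ ^ 2` in the expansion of `(A + 2 * b * ξ + g * ξ ^ 2) ^ p`. -/
def quadCoeff (p : ℕ) (A b g : ℝ) : ℝ :=
  p * A ^ (p - 1) * g + 2 * p * (p - 1) * A ^ (p - 2) * b ^ 2

lemma quadCoeff_nonneg {p : ℕ} {A b g : ℝ} (hA : 0 ≤ A) (hg : 0 ≤ g) : 0 ≤ quadCoeff p A b g := by
  rcases p.eq_zero_or_pos with rfl | hp
  · simp [quadCoeff]
  · have : (1 : ℝ) ≤ p := mod_cast hp
    have : (0 : ℝ) ≤ p - 1 := by linarith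
    unfold quadCoeff
    positivity

lemma quadCoeff_le {p : ℕ} {A b g : ℝ} (hA : 0 ≤ A) (hg : 0 ≤ g) (hb : b ^ 2 ≤ g * A) :
    quadCoeff p A b g ≤ 2 * p ^ 2 * (g * A ^ (p - 1)) := by
  match p with
  | 0 => simp [quadCoeff]
  | 1 =>
    simp only [quadCoeff]
    norm_num
    linarith
  | q + 2 =>
    have hAb : A ^ q * b ^ 2 ≤ A ^ q * (g * A) := by gcongr
    have hmul := mul_le_mul_of_nonneg_left hAb (by positivity : (0 : ℝ) ≤ 2 * (q + 2) * (q + 1))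
    have hgA : 0 ≤ (q + 2) * (A ^ q * (g * A)) := by positivity
    rw [quadCoeff, show q + 2 - 1 = q + 1 from rfl, show q + 2 - 2 = q from rfl]
    push_cast
    rw [pow_succ A q]
    linarith

lemma abs_cubic_terms_le {q x y t : ℝ} (hq : 0 ≤ q) (hx : 0 ≤ x) (hy : 0 ≤ y) (ht : |t| ≤ x * y) :
    |4 * x ^ 2 * t * y ^ 2 + x ^ 2 * y ^ 4 + 2 * (q + 1) * t ^ 2 * (2 * t + y ^ 2)| ≤
      (2 * q + 3) * (y ^ 3 * (2 * x + y) ^ 3) := by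
  have ht2 : t ^ 2 ≤ (x * y) ^ 2 := sq_le_sq' (abs_le.mp ht).1 (abs_le.mp ht).2
  have hsum : |2 * t + y ^ 2| ≤ y * (2 * x + y) := by
    obtain ⟨h1, h2⟩ := abs_le.mp ht
    exact abs_le.mpr ⟨by nlinarith, by nlinarith⟩
  have h1 : 4 * x ^ 3 + x ^ 2 * y ≤ (2 * x + y) ^ 3 := by
    have : 0 ≤ 4 * x ^ 3 + 11 * x ^ 2 * y + 6 * x * y ^ 2 + y ^ 3 := by positivity
    linarith
  have h2 : x ^ 2 * (2 * x + y) ≤ (2 * x + y) ^ 3 := by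
    rw [pow_succ (2 * x + y) 2]
    gcongr
    linarith
  calc _ ≤ 4 * x ^ 2 * (x * y) * y ^ 2 + x ^ 2 * y ^ 4 +
        2 * (q + 1) * (x * y) ^ 2 * (y * (2 * x + y)) := by
        refine (abs_add_three _ _ _).trans ?_
        simp only [abs_mul, abs_pow, abs_of_nonneg hx, abs_of_nonneg hy, sq_abs t, Nat.abs_ofNat,
          abs_of_nonneg (by positivity : 0 ≤ q + 1)]
        gcongr
    _ = y ^ 3 * (4 * x ^ 3 + x ^ 2 * y) + 2 * (q + 1) * (y ^ 3 * (x ^ 2 * (2 * x + y))) := by ring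
    _ ≤ y ^ 3 * (2 * x + y) ^ 3 + 2 * (q + 1) * (y ^ 3 * (2 * x + y) ^ 3) :=
        add_le_add (mul_le_mul_of_nonneg_left h1 (by positivity)) (by gcongr)
    _ = _ := by ring

/-- With `w = 2 * x + y`, every monomial of degree at least three in `(t, y ^ 2)` is bounded by
`y ^ 3 * w ^ (2 * q + 1)`, and this bound is inherited from `q` to `q + 1` because
`|x ^ 2 + 2 * t + y ^ 2| ≤ w ^ 2`. -/
lemma exists_abs_pow_add_two_sub_le (q : ℕ) : ∃ C, 0 ≤ C ∧ ∀ x y t : ℝ, 0 ≤ x → 0 ≤ y →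
    |t| ≤ x * y →
    |(x ^ 2 + 2 * t + y ^ 2) ^ (q + 2) - (x ^ 2) ^ (q + 2) - 2 * (q + 2) * (x ^ 2) ^ (q + 1) * t -
      ((q + 2) * (x ^ 2) ^ (q + 1) * y ^ 2 + 2 * (q + 2) * (q + 1) * (x ^ 2) ^ q * t ^ 2)| ≤
      C * (y ^ 3 * (2 * x + y) ^ (2 * q + 1)) := by
  induction q with
  | zero =>
    refine ⟨2, zero_le_two, fun x y t _ hy ht => ?_⟩
    calc _ = |4 * t * y ^ 2 + y ^ 4| := by congr 1; push_cast; ring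
      _ ≤ 4 * (x * y) * y ^ 2 + y ^ 4 := by
          refine (abs_add_le _ _).trans ?_
          simp only [abs_mul, abs_pow, abs_of_nonneg hy, Nat.abs_ofNat]
          gcongr
      _ ≤ 2 * (y ^ 3 * (2 * x + y) ^ (2 * 0 + 1)) := by
          have : 0 ≤ y ^ 4 := by positivity
          rw [mul_zero, zero_add, pow_one]
          linarith
  | succ q ih =>
    obtain ⟨C, hC, ih⟩ := ih
    refine ⟨C + (q + 2) * (2 * q + 3), by positivity, fun x y t hx hy ht => ?_⟩
    have hfactor : |x ^ 2 + 2 * t + y ^ 2| ≤ (2 * x + y) ^ 2 := by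
      obtain ⟨h1, h2⟩ := abs_le.mp ht
      exact abs_le.mpr ⟨by nlinarith, by nlinarith⟩
    calc _ = |(x ^ 2 + 2 * t + y ^ 2) * ((x ^ 2 + 2 * t + y ^ 2) ^ (q + 2) - (x ^ 2) ^ (q + 2) -
          2 * (q + 2) * (x ^ 2) ^ (q + 1) * t - ((q + 2) * (x ^ 2) ^ (q + 1) * y ^ 2 +
            2 * (q + 2) * (q + 1) * (x ^ 2) ^ q * t ^ 2)) +
          (q + 2) * (x ^ 2) ^ q * (4 * x ^ 2 * t * y ^ 2 + x ^ 2 * y ^ 4 +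
            2 * (q + 1) * t ^ 2 * (2 * t + y ^ 2))| := by
          congr 1; push_cast; ring
      _ ≤ (2 * x + y) ^ 2 * (C * (y ^ 3 * (2 * x + y) ^ (2 * q + 1))) +
          (q + 2) * ((2 * x + y) ^ 2) ^ q * ((2 * q + 3) * (y ^ 3 * (2 * x + y) ^ 3)) := by
          refine (abs_add_le _ _).trans (add_le_add ?_ ?_)
          · rw [abs_mul]
            exact mul_le_mul hfactor (ih x y t hx hy ht) (abs_nonneg _) (by positivity)
          · rw [abs_mul, abs_of_nonneg (by positivity : 0 ≤ ((q : ℝ) + 2) * (x ^ 2) ^ q)]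
            have := abs_cubic_terms_le q.cast_nonneg hx hy ht
            gcongr
            linarith
      _ = _ := by rw [← pow_mul]; ring

lemma one_add_pow_le {x : ℝ} (hx : 0 ≤ x) (n : ℕ) : (1 + x) ^ n ≤ 2 ^ n * (1 + x ^ n) := by
  rcases le_total x 1 with h | h
  · calc (1 + x) ^ n ≤ 2 ^ n := by gcongr; linarith
      _ ≤ 2 ^ n * (1 + x ^ n) :=
          le_mul_of_one_le_right (by positivity) (le_add_of_nonneg_right (by positivity))
  · calc (1 + x) ^ n ≤ (2 * x) ^ n := by gcongr; linarith
      _ ≤ 2 ^ n * (1 + x ^ n) := by rw [mul_pow]; gcongr; linarith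

lemma pow_three_mul_pow_le {x s K e : ℝ} (hx : 0 ≤ x) (hs : 0 ≤ s) (hsK : s ≤ K) (he : 0 ≤ e)
    (q : ℕ) : (s * e) ^ 3 * (2 * x + s * e) ^ (2 * q + 1) ≤
      (2 + K) ^ (2 * q + 1) * 2 ^ (2 * (q + 1)) * 2 ^ (2 * (q + 2)) *
        (s ^ 3 * (1 + (x ^ 2) ^ (q + 1)) * (1 + e ^ (2 * (q + 2)))) := by
  have hK : 0 ≤ K := hs.trans hsK
  have hbase : 2 * x + s * e ≤ (2 + K) * ((1 + x) * (1 + e)) := by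
    have : 0 ≤ 2 + 2 * e + 2 * x * e + K + K * x + K * x * e + (K - s) * e := by
      have := mul_nonneg (sub_nonneg.mpr hsK) he
      positivity
    linarith
  calc (s * e) ^ 3 * (2 * x + s * e) ^ (2 * q + 1)
      ≤ (s * (1 + e)) ^ 3 * ((2 + K) * ((1 + x) * (1 + e))) ^ (2 * q + 1) := by gcongr; linarith
    _ = (2 + K) ^ (2 * q + 1) * (s ^ 3 * (1 + x) ^ (2 * q + 1) * (1 + e) ^ (2 * (q + 2))) := by
        rw [mul_pow (2 + K), mul_pow (1 + x)]
        ring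
    _ ≤ (2 + K) ^ (2 * q + 1) * (s ^ 3 * (1 + x) ^ (2 * (q + 1)) * (1 + e) ^ (2 * (q + 2))) := by
        gcongr <;> linarith
    _ ≤ (2 + K) ^ (2 * q + 1) * (s ^ 3 * (2 ^ (2 * (q + 1)) * (1 + x ^ (2 * (q + 1)))) *
          (2 ^ (2 * (q + 2)) * (1 + e ^ (2 * (q + 2))))) := by
        gcongr
        exacts [one_add_pow_le hx _, one_add_pow_le he _]
    _ = _ := by ring

theorem exists_abs_pow_expansion_le (p : ℕ) {G : ℝ} : ∃ C, 0 ≤ C ∧ ∀ A b g e : ℝ,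
    0 ≤ A → 0 ≤ g → g ≤ G → b ^ 2 ≤ g * A →
    |(A + 2 * b * e + g * e ^ 2) ^ p - A ^ p - 2 * p * A ^ (p - 1) * b * e -
      quadCoeff p A b g * e ^ 2| ≤
      C * (g * √g * (1 + A ^ (p - 1)) * (1 + |e| ^ (2 * p))) := by
  match p with
  | 0 => exact ⟨0, le_rfl, fun A b g e _ _ _ _ => by simp [quadCoeff]⟩
  | 1 =>
    refine ⟨0, le_rfl, fun A b g e _ _ _ _ => le_of_eq ?_⟩
    simp only [quadCoeff, zero_mul, abs_eq_zero]
    push_cast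
    ring
  | q + 2 =>
    obtain ⟨C, hC, hbound⟩ := exists_abs_pow_add_two_sub_le q
    refine ⟨C * ((2 + √G) ^ (2 * q + 1) * 2 ^ (2 * (q + 1)) * 2 ^ (2 * (q + 2))), by positivity,
      fun A b g e hA hg hgG hb => ?_⟩
    have hbe : |b * e| ≤ √A * (√g * |e|) := by
      have : |b| ≤ √g * √A := by
        rw [← Real.sqrt_mul hg]
        exact Real.abs_le_sqrt hb
      calc |b * e| ≤ √g * √A * |e| := by rw [abs_mul]; gcongr
        _ = _ := by ring
    have h := hbound √A (√g * |e|) (b * e) (by positivity) (by positivity) hbe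
    have hle := mul_le_mul_of_nonneg_left (pow_three_mul_pow_le (Real.sqrt_nonneg A)
      (Real.sqrt_nonneg g) (Real.sqrt_le_sqrt hgG) (abs_nonneg e) q) hC
    rw [mul_pow, Real.sq_sqrt hA, Real.sq_sqrt hg, sq_abs] at h
    rw [Real.sq_sqrt hA, pow_succ √g 2, Real.sq_sqrt hg] at hle
    convert! h.trans hle using 1
    · rw [quadCoeff, show q + 2 - 1 = q + 1 from rfl, show q + 2 - 2 = q from rfl]
      push_cast
      congr 1
      ring
    · rw [show q + 2 - 1 = q + 1 from rfl]
      ring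

end PowerExpansion

section Clock

lemma mul_div_rpow_one_add_le {x y δ : ℝ} (hx : 0 < x) (hxy : x ≤ y) (hδ : 0 < δ) :
    δ * ((y - x) / y ^ (1 + δ)) ≤ x ^ (-δ) - y ^ (-δ) := by
  have hy : 0 < y := hx.trans_le hxy
  have hu : 0 < x / y := div_pos hx hy
  have hbernoulli : 1 + δ * (1 - x / y) ≤ (x / y) ^ (-δ) := by
    rw [Real.rpow_def_of_pos hu]
    nlinarith [Real.add_one_le_exp (Real.log (x / y) * -δ), Real.log_le_sub_one_of_pos hu]
  have hquot : (y - x) / y ^ (1 + δ) = (1 - x / y) * y ^ (-δ) := by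
    rw [Real.rpow_add hy, Real.rpow_one, Real.rpow_neg hy.le]
    field_simp
  have hxδ : x ^ (-δ) = (x / y) ^ (-δ) * y ^ (-δ) := by
    rw [← Real.mul_rpow hu.le hy.le, div_mul_cancel₀ _ hy.ne']
  rw [hxδ, hquot]
  linarith [mul_le_mul_of_nonneg_right hbernoulli (Real.rpow_nonneg hy.le (-δ))]

variable {Ω : Type*} {m0 : MeasurableSpace Ω} {μ : Measure Ω} {F : Filtration ℕ m0}
  {γ : ℕ → Ω → ℝ}

/-- The clock `1 + γ_0 + ⋯ + γ_n` driven by the increments `γ`. It includes the `n`-th increment,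
which is known at time `n`. -/
def clock (γ : ℕ → Ω → ℝ) (n : ℕ) (ω : Ω) : ℝ :=
  1 + ∑ k ∈ range (n + 1), γ k ω

lemma one_le_clock (h0 : ∀ n ω, 0 ≤ γ n ω) (n : ℕ) (ω : Ω) : 1 ≤ clock γ n ω :=
  le_add_of_nonneg_right (sum_nonneg fun k _ => h0 k ω)

lemma clock_pos (h0 : ∀ n ω, 0 ≤ γ n ω) (n : ℕ) (ω : Ω) : 0 < clock γ n ω :=
  one_pos.trans_le (one_le_clock h0 n ω)

lemma clock_succ (n : ℕ) (ω : Ω) : clock γ (n + 1) ω = clock γ n ω + γ (n + 1) ω := by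
  rw [clock, sum_range_succ, clock, add_assoc]

lemma clock_mono (h0 : ∀ n ω, 0 ≤ γ n ω) (ω : Ω) : Monotone (clock γ · ω) :=
  monotone_nat_of_le_succ fun n => by
    rw [clock_succ]
    exact le_add_of_nonneg_right (h0 _ ω)

lemma measurable_clock (hγ : ∀ n, Measurable[F n] (γ n)) (n : ℕ) : Measurable[F n] (clock γ n) :=
  measurable_const.add (Finset.measurable_fun_sum _ fun k hk =>
    (hγ k).mono (F.mono (Nat.lt_succ_iff.mp (mem_range.mp hk))) le_rfl)

lemma isClock_clock (hγ : ∀ n, Measurable[F n] (γ n)) (h0 : ∀ n ω, 0 ≤ γ n ω)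
    (htop : ∀ᵐ ω ∂μ, Tendsto (fun n => ∑ k ∈ range n, γ k ω) atTop atTop) :
    IsClock μ F (clock γ) where
  measurable := measurable_clock hγ
  one_le := one_le_clock h0
  monotone := clock_mono h0
  tendsto := htop.mono fun _ h =>
    tendsto_atTop_add_const_left _ _ (h.comp (tendsto_add_atTop_nat 1))

lemma summable_div_clock_rpow (h0 : ∀ n ω, 0 ≤ γ n ω) {θ : ℝ} (hθ : 1 < θ) (ω : Ω) :
    Summable fun n => γ n ω / clock γ n ω ^ θ := by
  have hδ : 0 < θ - 1 := sub_pos.mpr hθ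
  have hT : ∀ n, 0 < 1 + ∑ k ∈ range n, γ k ω := fun n =>
    add_pos_of_pos_of_nonneg one_pos (sum_nonneg fun k _ => h0 k ω)
  have hle : ∀ n, (θ - 1) * ∑ i ∈ range n, γ i ω / clock γ i ω ^ θ ≤
      1 - (1 + ∑ k ∈ range n, γ k ω) ^ (-(θ - 1)) := by
    intro n
    induction n with
    | zero => simp
    | succ n ih =>
      have hstep : 1 + ∑ k ∈ range n, γ k ω ≤ clock γ n ω := by
        rw [clock, sum_range_succ]
        linarith [h0 n ω]
      have h := mul_div_rpow_one_add_le (hT n) hstep hδ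
      have hinc : clock γ n ω - (1 + ∑ k ∈ range n, γ k ω) = γ n ω := by
        rw [clock, sum_range_succ]
        ring
      rw [hinc, add_sub_cancel] at h
      rw [sum_range_succ, mul_add]
      exact (add_le_add ih h).trans_eq (by rw [clock]; ring)
  refine summable_of_sum_range_le (c := (θ - 1)⁻¹) (fun n => ?_) (fun n => ?_)
  · exact div_nonneg (h0 n ω) (Real.rpow_nonneg (clock_pos h0 n ω).le _)
  · rw [← one_div, le_div_iff₀' hδ]
    exact (hle n).trans (sub_le_self _ (Real.rpow_nonneg (hT n).le _))

end Clock

section APriori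

lemma exists_pow_expansion_le (p : ℕ) {G : ℝ} : ∃ C, 0 ≤ C ∧ ∀ A b g e : ℝ,
    0 ≤ A → 0 ≤ g → g ≤ G → b ^ 2 ≤ g * A →
    (A + 2 * b * e + g * e ^ 2) ^ p ≤
      A ^ p + 2 * p * A ^ (p - 1) * b * e + C * g * (1 + A ^ (p - 1)) * (1 + |e| ^ (2 * p)) := by
  obtain ⟨C, hC, hexp⟩ := exists_abs_pow_expansion_le p (G := G)
  refine ⟨2 * p ^ 2 + C * √G, by positivity, fun A b g e hA hg hgG hb => ?_⟩
  have hquad : quadCoeff p A b g * e ^ 2 ≤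
      2 * p ^ 2 * (g * (1 + A ^ (p - 1)) * (1 + |e| ^ (2 * p))) := by
    rcases p.eq_zero_or_pos with rfl | hp
    · simp [quadCoeff]
    have he : e ^ 2 ≤ 1 + |e| ^ (2 * p) := by
      rw [← sq_abs e]
      have := pow_le_one_add_rpow (r := 2) (a := (2 * p : ℕ)) (abs_nonneg e) (by norm_cast; omega)
      rwa [Real.rpow_natCast] at this
    calc _ ≤ 2 * p ^ 2 * (g * A ^ (p - 1)) * (1 + |e| ^ (2 * p)) := by
          gcongr
          exact quadCoeff_le hA hg hb
      _ ≤ 2 * p ^ 2 * (g * (1 + A ^ (p - 1))) * (1 + |e| ^ (2 * p)) := by gcongr; linarith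
      _ = _ := by ring
  have hrem : C * (g * √g * (1 + A ^ (p - 1)) * (1 + |e| ^ (2 * p))) ≤
      C * (g * √G * (1 + A ^ (p - 1)) * (1 + |e| ^ (2 * p))) := by gcongr
  linarith [(abs_le.mp (hexp A b g e hA hg hgG hb)).2]

lemma pow_le_one_sub_mul_pow {x y c : ℝ} {p : ℕ} (hp : p ≠ 0) (hx : 0 ≤ x) (hy : 0 ≤ y)
    (hc : 0 ≤ c) (hxy : x ≤ (1 - c) * y) : x ^ p ≤ (1 - c) * y ^ p := by
  rcases hy.eq_or_lt with rfl | hy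
  · have hx0 : x = 0 := (hxy.trans_eq (mul_zero _)).antisymm hx
    simp [hx0, hp]
  have hc1 : 0 ≤ 1 - c := nonneg_of_mul_nonneg_left (hx.trans hxy) hy
  calc x ^ p ≤ ((1 - c) * y) ^ p := pow_le_pow_left₀ hx hxy p
    _ = (1 - c) ^ p * y ^ p := mul_pow ..
    _ ≤ (1 - c) * y ^ p := by gcongr; exact pow_le_of_le_one hc1 (by linarith) hp

lemma mul_one_add_pow_le {H z : ℝ} {p : ℕ} (hp : p ≠ 0) (hH : 0 ≤ H) (hz : 0 ≤ z) :
    H * (1 + z ^ (p - 1)) ≤ z ^ p / 2 + H * (1 + (2 * H) ^ (p - 1)) := by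
  have hmono : ∀ w, 0 ≤ w → 0 ≤ H * w ^ (p - 1) := fun w hw => by positivity
  rcases le_total (2 * H) z with h | h
  · have : H * z ^ (p - 1) ≤ z ^ p / 2 := by
      rw [← Nat.sub_one_add_one hp, pow_succ, Nat.add_sub_cancel]
      linarith [mul_le_mul_of_nonneg_right h (pow_nonneg hz (p - 1))]
    linarith [hmono (2 * H) (by positivity)]
  · have : H * z ^ (p - 1) ≤ H * (2 * H) ^ (p - 1) := by gcongr
    linarith [pow_nonneg hz p]

variable {Ω : Type*} {m0 : MeasurableSpace Ω} {μ : Measure Ω} {F : Filtration ℕ m0}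

theorem ae_le_clock_rpow_and_summable [IsProbabilityMeasure μ] {Y H γ u : ℕ → Ω → ℝ}
    (hY : Measurable[F 0] (Y 0)) (hH : ∀ n, Measurable[F n] (H n))
    (hγ : ∀ n, Measurable[F n] (γ n)) (hu : ∀ n, Measurable[F (n + 1)] (u n))
    (hcent : ∀ n, CondCentered μ (F n) (u n)) (hY0 : ∀ n ω, 0 ≤ Y n ω) (hγ0 : ∀ n ω, 0 ≤ γ n ω)
    (hH0 : ∀ n ω, 0 ≤ H n ω) (hHbdd : ∀ᵐ ω ∂μ, ∃ K, ∀ n, H n ω ≤ K)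
    (hrec : ∀ n, ∀ᵐ ω ∂μ,
      Y (n + 1) ω ≤ Y n ω - γ n ω * Y n ω / 2 + γ n ω * H n ω + u n ω) {θ : ℝ} (hθ : 1 < θ) :
    ∀ᵐ ω ∂μ, (∃ K, ∀ n, Y n ω ≤ K * clock γ n ω ^ θ) ∧
      Summable fun n => γ n ω * Y n ω / clock γ n ω ^ θ := by
  have hpos : ∀ n ω, 0 < clock γ n ω ^ θ := fun n ω => Real.rpow_pos_of_pos (clock_pos hγ0 n ω) θ
  have hτ : ∀ n, Measurable[F n] fun ω => (clock γ n ω ^ θ)⁻¹ := fun n => by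
    have := measurable_clock hγ n
    fun_prop
  have hRS := robbins_siegmund (μ := μ) (F := F) (Y := fun n ω => Y n ω / clock γ n ω ^ θ)
    (D := fun n ω => γ n ω * Y n ω / clock γ n ω ^ θ / 2)
    (B := fun n ω => γ n ω * H n ω / clock γ n ω ^ θ)
    (u := fun n => (fun ω => (clock γ n ω ^ θ)⁻¹) * u n) (hY.mul (hτ 0))
    (fun n => ((hγ n).mul (hH n)).mul (hτ n))
    (fun n => ((hτ n).mono (F.mono n.le_succ) le_rfl).mul (hu n))
    (fun n => (hcent n).mul_left (hτ n)) (fun n ω => div_nonneg (hY0 n ω) (hpos n ω).le)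
    (fun n ω => div_nonneg (div_nonneg (mul_nonneg (hγ0 n ω) (hY0 n ω)) (hpos n ω).le) two_pos.le)
    (fun n => ?_) ?_
  · filter_upwards [hRS] with ω ⟨⟨K, hK⟩, hsum⟩
    exact ⟨⟨K, fun n => (div_le_iff₀ (hpos n ω)).mp (hK n)⟩,
      (hsum.mul_left 2).congr fun n => by ring⟩
  · filter_upwards [hrec n] with ω hω
    have hmono : Y (n + 1) ω / clock γ (n + 1) ω ^ θ ≤ Y (n + 1) ω / clock γ n ω ^ θ :=
      div_le_div_of_nonneg_left (hY0 _ ω) (hpos n ω)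
        (Real.rpow_le_rpow (clock_pos hγ0 n ω).le (clock_mono hγ0 ω n.le_succ) (by linarith))
    have hdiv := hmono.trans (div_le_div_of_nonneg_right hω (hpos n ω).le)
    refine (add_le_add_left hdiv _).trans_eq ?_
    rw [Pi.mul_apply]
    ring
  · filter_upwards [hHbdd] with ω ⟨K, hK⟩
    refine .of_nonneg_of_le
      (fun n => div_nonneg (mul_nonneg (hγ0 n ω) (hH0 n ω)) (hpos n ω).le) (fun n => ?_)
      ((summable_div_clock_rpow hγ0 hθ ω).mul_left K)
    rw [← mul_div_assoc, mul_comm K]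
    exact div_le_div_of_nonneg_right (mul_le_mul_of_nonneg_left (hK n) (hγ0 n ω)) (hpos n ω).le

variable {ξ : ℕ → Ω → ℝ} {σ a G : ℝ} {Z A b g : ℕ → Ω → ℝ}

/-- A nonnegative adapted process updated by a quadratic polynomial in the noise, as a quadratic
form evaluated along `x ↦ x + ξ n • v` is: the base `A` is its value at `x`, the cross term `b` its
polarisation at `(x, v)`, and the gain `g` its value at `v`. -/
structure IsPotential (F : Filtration ℕ m0) (ξ : ℕ → Ω → ℝ) (G : ℝ) (Z A b g : ℕ → Ω → ℝ) :
    Prop where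
  measurable : ∀ n, Measurable[F n] (Z n)
  measurable_base : ∀ n, Measurable[F n] (A n)
  measurable_cross : ∀ n, Measurable[F n] (b n)
  measurable_gain : ∀ n, Measurable[F n] (g n)
  succ_eq : ∀ n ω, Z (n + 1) ω = A n ω + 2 * b n ω * ξ n ω + g n ω * ξ n ω ^ 2
  base_nonneg : ∀ n ω, 0 ≤ A n ω
  base_le : ∀ n ω, A n ω ≤ Z n ω
  sq_cross_le : ∀ n ω, b n ω ^ 2 ≤ g n ω * A n ω
  gain_nonneg : ∀ n ω, 0 ≤ g n ω
  gain_le : ∀ n ω, g n ω ≤ G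

namespace IsPotential

lemma nonneg (hZ : IsPotential F ξ G Z A b g) (n : ℕ) (ω : Ω) : 0 ≤ Z n ω :=
  (hZ.base_nonneg n ω).trans (hZ.base_le n ω)

lemma exists_pow_succ_le (hZ : IsPotential F ξ G Z A b g) {p : ℕ} (hp : p ≠ 0)
    {γ : ℕ → Ω → ℝ} (hγ0 : ∀ n ω, 0 ≤ γ n ω) {D : ℝ}
    (hD : 0 ≤ D) (hA : ∀ n ω, A n ω ≤ (1 - γ n ω) * Z n ω) (hgγ : ∀ n ω, g n ω ≤ D * γ n ω) :
    ∃ C, 0 ≤ C ∧ ∀ n ω κ ζ, 0 ≤ κ → |ξ n ω| ^ (2 * p) ≤ κ + ζ → Z (n + 1) ω ^ p ≤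
      Z n ω ^ p - γ n ω * Z n ω ^ p / 2 +
        γ n ω * (C * (1 + κ) * (1 + (2 * (C * (1 + κ))) ^ (p - 1))) +
        (2 * p * A n ω ^ (p - 1) * b n ω * ξ n ω +
          C * γ n ω * (1 + A n ω ^ (p - 1)) * ζ) := by
  obtain ⟨C, hC, hexp⟩ := exists_pow_expansion_le p (G := G)
  refine ⟨C * D, by positivity, fun n ω κ ζ hκ hζ => ?_⟩
  have hA0 := hZ.base_nonneg n ω
  have hγ := hγ0 n ω
  have hZ0 := hZ.nonneg n ω
  have hcontr := pow_le_one_sub_mul_pow hp hA0 hZ0 hγ (hA n ω)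
  have hgain : C * g n ω * (1 + A n ω ^ (p - 1)) * (1 + |ξ n ω| ^ (2 * p)) ≤
      C * D * γ n ω * (1 + A n ω ^ (p - 1)) * (1 + (κ + ζ)) := by
    calc _ ≤ C * (D * γ n ω) * (1 + A n ω ^ (p - 1)) * (1 + |ξ n ω| ^ (2 * p)) := by
          gcongr
          exact hgγ n ω
      _ ≤ C * (D * γ n ω) * (1 + A n ω ^ (p - 1)) * (1 + (κ + ζ)) := by gcongr
      _ = _ := by ring
  have habsorb : C * D * γ n ω * (1 + A n ω ^ (p - 1)) * (1 + κ) ≤ γ n ω * (Z n ω ^ p / 2 +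
      C * D * (1 + κ) * (1 + (2 * (C * D * (1 + κ))) ^ (p - 1))) := by
    calc _ ≤ γ n ω * (C * D * (1 + κ) * (1 + Z n ω ^ (p - 1))) := by
          rw [show C * D * γ n ω * (1 + A n ω ^ (p - 1)) * (1 + κ) =
            γ n ω * (C * D * (1 + κ) * (1 + A n ω ^ (p - 1))) by ring]
          have := hZ.base_le n ω
          gcongr
      _ ≤ _ := by gcongr; exact mul_one_add_pow_le hp (by positivity) hZ0
  rw [hZ.succ_eq]
  linarith [hexp (A n ω) (b n ω) (g n ω) (ξ n ω) hA0 (hZ.gain_nonneg n ω) (hZ.gain_le n ω)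
    (hZ.sq_cross_le n ω)]

theorem ae_pow_le_clock_rpow_and_summable [IsProbabilityMeasure μ]
    (hZ : IsPotential F ξ G Z A b g) (hξ : IsMomentNoise μ F ξ σ a) {p : ℕ} (hp : p ≠ 0)
    (hpa : 2 * p ≤ a) {γ : ℕ → Ω → ℝ} (hγ : ∀ n, Measurable[F n] (γ n))
    (hγ0 : ∀ n ω, 0 ≤ γ n ω) {D : ℝ} (hD : 0 ≤ D) (hA : ∀ n ω, A n ω ≤ (1 - γ n ω) * Z n ω)
    (hgγ : ∀ n ω, g n ω ≤ D * γ n ω) {θ : ℝ} (hθ : 1 < θ) :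
    ∀ᵐ ω ∂μ, (∃ K, ∀ n, Z n ω ^ p ≤ K * clock γ n ω ^ θ) ∧
      Summable fun n => γ n ω * Z n ω ^ p / clock γ n ω ^ θ := by
  obtain ⟨κ, ζ, hκm, hζm, hζ, hle, hκ0, hκ⟩ :=
    hξ.condBounded_pow (r := 2 * p) (by exact_mod_cast hpa)
  obtain ⟨C, hC, hstep⟩ := hZ.exists_pow_succ_le hp hγ0 hD hA hgγ
  have hX : ∀ n, Measurable[F n] fun ω => 2 * p * A n ω ^ (p - 1) * b n ω := fun n => by
    have := hZ.measurable_base n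
    have := hZ.measurable_cross n
    fun_prop
  have hX' : ∀ n, Measurable[F n] fun ω => C * γ n ω * (1 + A n ω ^ (p - 1)) := fun n => by
    have := hZ.measurable_base n
    have := hγ n
    fun_prop
  refine ae_le_clock_rpow_and_summable (Y := fun n ω => Z n ω ^ p)
    (H := fun n ω => C * (1 + κ n ω) * (1 + (2 * (C * (1 + κ n ω))) ^ (p - 1)))
    ((hZ.measurable 0).pow_const p) (fun n => by have := hκm n; fun_prop) hγ
    (fun n => (((hX n).mono (F.mono n.le_succ) le_rfl).mul (hξ.measurable n)).add
      (((hX' n).mono (F.mono n.le_succ) le_rfl).mul (hζm n)))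
    (fun n => ((hξ.condCentered n).mul_left (hX n)).add (F.le n) ((hζ n).mul_left (hX' n)))
    (fun n ω => pow_nonneg (hZ.nonneg n ω) p) hγ0
    (fun n ω => by have := hκ0 n ω; positivity) ?_ (fun n => ?_) hθ
  · filter_upwards [hκ] with ω ⟨K, hK⟩
    refine ⟨C * (1 + K) * (1 + (2 * (C * (1 + K))) ^ (p - 1)), fun n => ?_⟩
    have hn := hκ0 n ω
    have hK0 : 0 ≤ 1 + K := by linarith [hK n]
    have := hK n
    gcongr
  · filter_upwards [hle n] with ω hω
    exact hstep n ω _ _ (hκ0 n ω) hω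

end IsPotential

end APriori

section Expansion

lemma isLittleO_const_of_tendsto_atTop {t : ℕ → ℝ} (ht : Tendsto t atTop atTop) (c : ℝ) :
    (fun _ => c) =o[atTop] t :=
  Asymptotics.isLittleO_const_left.mpr (.inr (tendsto_abs_atTop_atTop.comp ht))

lemma isLittleO_mul_one_add_of_le_mul {x y δ e : ℕ → ℝ} {K : ℝ} (hδ : Tendsto δ atTop (𝓝 0))
    (hx : ∀ n, 0 ≤ x n) (hxy : ∀ n, x n ≤ δ n * y n) (he : ∀ n, 0 ≤ e n) (heK : ∀ n, e n ≤ K) :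
    (fun n => x n * (1 + e n)) =o[atTop] y := by
  have h : (fun n => δ n * (1 + K) * y n) =o[atTop] fun n => 1 * y n :=
    ((Asymptotics.isLittleO_one_iff ℝ).mpr (by simpa using hδ.mul_const (1 + K))).mul_isBigO
      (Asymptotics.isBigO_refl _ _)
  simp only [one_mul] at h
  refine (Asymptotics.IsBigO.of_norm_le fun n => ?_).trans_isLittleO h
  have he1 : 0 ≤ 1 + e n := add_nonneg zero_le_one (he n)
  rw [Real.norm_of_nonneg (mul_nonneg (hx n) he1), mul_right_comm]
  exact mul_le_mul (hxy n) (add_le_add_right (heK n) 1) he1 ((hx n).trans (hxy n))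

lemma isLittleO_sum_range_of_isBigO {x y t : ℕ → ℝ} (hyx : y =o[atTop] x) (hx : ∀ n, 0 ≤ x n)
    (ht_mono : Monotone t) (ht : Tendsto t atTop atTop)
    (hO : (fun n => ∑ k ∈ range n, x k) =O[atTop] t) :
    (fun n => ∑ k ∈ range n, y k) =o[atTop] t := by
  have hinc : ∀ n, 0 ≤ t (n + 1) - t n := fun n => sub_nonneg.mpr (ht_mono n.le_succ)
  have hsum : (fun n => ∑ k ∈ range n, (x k + (t (k + 1) - t k))) =
      fun n => ∑ k ∈ range n, x k + (t n - t 0) := by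
    funext n
    rw [sum_add_distrib, sum_range_sub]
  have hle : y =o[atTop] fun n => x n + (t (n + 1) - t n) := hyx.trans_le fun n => by
    rw [Real.norm_of_nonneg (hx n), Real.norm_of_nonneg (add_nonneg (hx n) (hinc n))]
    exact le_add_of_nonneg_right (hinc n)
  have htop : Tendsto (fun n => ∑ k ∈ range n, (x k + (t (k + 1) - t k))) atTop atTop := by
    rw [hsum]
    exact tendsto_atTop_mono (fun n => le_add_of_nonneg_left (sum_nonneg fun k _ => hx k))
      (tendsto_atTop_add_const_right _ (-t 0) ht)
  refine (hle.sum_range (fun n => add_nonneg (hx n) (hinc n)) htop).trans_isBigO ?_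
  rw [hsum]
  exact hO.add ((Asymptotics.isBigO_refl t atTop).sub
    (isLittleO_const_of_tendsto_atTop ht (t 0)).isBigO)

lemma isLittleO_sum_range_of_abs_le {x y t : ℕ → ℝ} {C : ℝ} (hle : ∀ n, |x n| ≤ C * y n)
    (hy : (fun n => ∑ k ∈ range n, y k) =o[atTop] t) :
    (fun n => ∑ k ∈ range n, x k) =o[atTop] t := by
  refine Asymptotics.IsBigO.trans_isLittleO (.of_bound |C| (.of_forall fun n => ?_)) hy
  calc |∑ k ∈ range n, x k| ≤ ∑ k ∈ range n, |x k| := abs_sum_le_sum_abs _ _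
    _ ≤ ∑ k ∈ range n, C * y k := sum_le_sum fun k _ => hle k
    _ ≤ |C| * |∑ k ∈ range n, y k| := by
        rw [← mul_sum, ← abs_mul]
        exact le_abs_self _

lemma pow_pred_le_mul_rpow {p : ℕ} (hp : p ≠ 0) {z K t θ : ℝ} (hz : 0 ≤ z) (hK : 0 ≤ K)
    (ht : 0 ≤ t) (hle : z ^ p ≤ K * t ^ θ) :
    z ^ (p - 1) ≤ K ^ (1 - 1 / p : ℝ) * t ^ (θ * (1 - 1 / p)) := by
  have hp1 : (1 : ℝ) ≤ p := mod_cast Nat.one_le_iff_ne_zero.mpr hp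
  have hρ : (0 : ℝ) ≤ 1 - 1 / p := sub_nonneg.mpr ((div_le_one (by linarith)).mpr hp1)
  calc z ^ (p - 1) = (z ^ p) ^ (1 - 1 / p : ℝ) := by
        rw [← Real.rpow_natCast_mul hz, ← Real.rpow_natCast,
          Nat.cast_sub (Nat.one_le_iff_ne_zero.mpr hp), Nat.cast_one]
        congr 1
        field_simp
    _ ≤ (K * t ^ θ) ^ (1 - 1 / p : ℝ) := by gcongr
    _ = _ := by rw [Real.mul_rpow hK (Real.rpow_nonneg ht _), Real.rpow_mul ht]

lemma exists_one_lt_mul_le {p : ℕ} (hp : p ≠ 0) {a : ℝ} (ha : 2 * p < a) :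
    ∃ s : ℝ, 1 < s ∧ s ≤ 2 ∧ 2 * p * s ≤ a ∧ ((p - 1 : ℕ) : ℝ) * s ≤ p := by
  have : (0 : ℝ) < p := by positivity
  have hcast : ((p - 1 : ℕ) : ℝ) = p - 1 := by
    rw [Nat.cast_sub (Nat.one_le_iff_ne_zero.mpr hp), Nat.cast_one]
  refine ⟨min 2 (min (a / (2 * p)) (1 + 1 / p)), ?_, min_le_left _ _, ?_, ?_⟩
  · exact lt_min one_lt_two
      (lt_min ((one_lt_div (by positivity)).mpr ha) (lt_add_of_pos_right _ (by positivity)))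
  · rw [mul_comm, ← le_div_iff₀ (by positivity)]
    exact (min_le_right _ _).trans (min_le_left _ _)
  · calc ((p - 1 : ℕ) : ℝ) * _ ≤ ((p - 1 : ℕ) : ℝ) * (1 + 1 / p) := by
          gcongr
          exact (min_le_right _ _).trans (min_le_right _ _)
      _ = p - 1 / p := by rw [hcast]; field_simp; ring
      _ ≤ p := sub_le_self _ (by positivity)

lemma abs_rpow_le_of_abs_le {p : ℕ} {s x C g G z : ℝ} (h1 : 1 < s) (h2 : s ≤ 2)
    (hps : ((p - 1 : ℕ) : ℝ) * s ≤ p) (hC : 0 ≤ C) (hg : 0 ≤ g) (hgG : g ≤ G) (hz : 0 ≤ z)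
    (hx : |x| ≤ C * (g * (1 + z ^ (p - 1)))) :
    |x| ^ s ≤ 8 * C ^ s * G ^ (s - 1) * (g * (1 + z ^ p)) := by
  have hgs : g ^ s ≤ G ^ (s - 1) * g := by
    rw [show s = (s - 1) + 1 by ring, Real.rpow_add_one' hg (by linarith), add_sub_cancel_right]
    gcongr
  have hzs : (1 + z ^ (p - 1)) ^ s ≤ 8 * (1 + z ^ p) := by
    have hpow : (z ^ (p - 1)) ^ s ≤ 1 + z ^ p := by
      rw [← Real.rpow_natCast_mul hz, ← Real.rpow_natCast z p]
      exact rpow_le_one_add_rpow hz (by positivity) hps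
    have := add_rpow_le_four_mul zero_le_one (pow_nonneg hz (p - 1)) h1.le h2
    rw [Real.one_rpow] at this
    linarith [pow_nonneg hz p]
  calc |x| ^ s ≤ (C * (g * (1 + z ^ (p - 1)))) ^ s := by gcongr
    _ = C ^ s * (g ^ s * (1 + z ^ (p - 1)) ^ s) := by
        rw [Real.mul_rpow hC (by positivity), Real.mul_rpow hg (by positivity)]
    _ ≤ C ^ s * (G ^ (s - 1) * g * (8 * (1 + z ^ p))) := by
        have : 0 ≤ G ^ (s - 1) := Real.rpow_nonneg (hg.trans hgG) _
        gcongr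
    _ = _ := by ring

variable {Ω : Type*} {m0 : MeasurableSpace Ω} {μ : Measure Ω} {F : Filtration ℕ m0}
  {ξ : ℕ → Ω → ℝ} {σ a G : ℝ} {Z A b g τ : ℕ → Ω → ℝ} {p : ℕ}

/-- Almost sure a priori bounds on a process `Y` with gains `g`: its growth in the clock `τ` is at
most of order `1 + o(1)`, and so is that of `∑ g (1 + Y)`, in a summed form. -/
def HasModerateGrowth (μ : Measure Ω) (τ g Y : ℕ → Ω → ℝ) : Prop :=
  ∀ θ : ℝ, 1 < θ → ∀ᵐ ω ∂μ, (∃ K, ∀ n, Y n ω ≤ K * τ n ω ^ θ) ∧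
    Summable fun n => g n ω * (1 + Y n ω) / τ n ω ^ θ

namespace IsPotential

lemma abs_linear_rpow_two_le (hZ : IsPotential F ξ G Z A b g) (hp : p ≠ 0) (n : ℕ) (ω : Ω) :
    |2 * p * A n ω ^ (p - 1) * b n ω| ^ (2 : ℝ) ≤
      4 * p ^ 2 * (g n ω * (1 + Z n ω ^ p) * Z n ω ^ (p - 1)) := by
  have hg := hZ.gain_nonneg n ω
  have hA := hZ.base_nonneg n ω
  have hAZ := hZ.base_le n ω
  have hZ0 := hZ.nonneg n ω
  calc _ = 4 * p ^ 2 * (A n ω ^ (p - 1)) ^ 2 * b n ω ^ 2 := by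
        rw [Real.rpow_two, sq_abs]
        ring
    _ ≤ 4 * p ^ 2 * (A n ω ^ (p - 1)) ^ 2 * (g n ω * A n ω) := by
        gcongr
        exact hZ.sq_cross_le n ω
    _ = 4 * p ^ 2 * (g n ω * A n ω ^ p * A n ω ^ (p - 1)) := by
        obtain ⟨q, rfl⟩ := Nat.exists_eq_succ_of_ne_zero hp
        rw [Nat.succ_sub_one, Nat.succ_eq_add_one]
        ring
    _ ≤ 4 * p ^ 2 * (g n ω * (1 + Z n ω ^ p) * Z n ω ^ (p - 1)) := by
        have : A n ω ^ p ≤ 1 + Z n ω ^ p := (pow_le_pow_left₀ hA hAZ p).trans (by linarith)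
        gcongr

variable [IsProbabilityMeasure μ]

/-- The summand is of order `g ^ (1 / 2) * Z ^ (p - 1 / 2)`, so that only the law of large numbers
with exponent `2` applies; the powers of `τ` needed there add up to less than `2`. -/
theorem ae_isLittleO_sum_linear (hZ : IsPotential F ξ G Z A b g) (hξ : IsMomentNoise μ F ξ σ a)
    (hτ : IsClock μ F τ) (hp : p ≠ 0) (ha : 2 ≤ a)
    (hgrow : HasModerateGrowth μ τ g fun n ω => Z n ω ^ p) :
    ∀ᵐ ω ∂μ, (fun n => ∑ k ∈ range n, 2 * p * A k ω ^ (p - 1) * b k ω * ξ k ω) =o[atTop]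
      (τ · ω) := by
  have hp0 : (0 : ℝ) < p := by positivity
  set ρ : ℝ := 1 - 1 / p with hρ
  set θ : ℝ := 1 + 1 / (2 * p) with hθ
  have hp1 : (1 : ℝ) ≤ p := mod_cast Nat.one_le_iff_ne_zero.mpr hp
  have hρ0 : 0 ≤ ρ := sub_nonneg.mpr ((div_le_one hp0).mpr hp1)
  have hθ1 : 1 < θ := lt_add_of_pos_right _ (by positivity)
  have hexp : θ + θ * ρ < 2 := by
    have : θ + θ * ρ = 2 - 1 / (2 * p ^ 2) := by rw [hθ, hρ]; field_simp; ring
    rw [this]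
    exact sub_lt_self _ (by positivity)
  refine ae_isLittleO_sum_mul (s := 2) one_le_two le_rfl (by positivity) hexp hτ (fun n => ?_)
    hξ.measurable hξ.condCentered ?_ ?_
  · have := hZ.measurable_base n
    have := hZ.measurable_cross n
    fun_prop
  · simpa only [← Real.rpow_natCast, Nat.cast_ofNat] using hξ.condBounded_pow (r := 2) (by simpa)
  filter_upwards [hgrow θ hθ1] with ω ⟨⟨K, hK⟩, hsum⟩
  have hτ0 := fun n => hτ.pos n ω
  have hK0 : 0 ≤ K := nonneg_of_mul_nonneg_left ((pow_nonneg (hZ.nonneg 0 ω) p).trans (hK 0))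
    (Real.rpow_pos_of_pos (hτ0 0) θ)
  refine .of_nonneg_of_le (fun n => div_nonneg (by positivity) (by have := hτ0 n; positivity))
    (fun n => ?_) (hsum.mul_left (4 * p ^ 2 * K ^ ρ))
  have hZ0 := hZ.nonneg n ω
  have hpow : Z n ω ^ (p - 1) ≤ K ^ ρ * τ n ω ^ (θ * ρ) :=
    pow_pred_le_mul_rpow hp hZ0 hK0 (hτ0 n).le (hK n)
  have hg := hZ.gain_nonneg n ω
  have := hτ0 n
  calc _ ≤ 4 * p ^ 2 * (g n ω * (1 + Z n ω ^ p) * (K ^ ρ * τ n ω ^ (θ * ρ))) /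
        τ n ω ^ (θ + θ * ρ) := by
        gcongr
        exact (hZ.abs_linear_rpow_two_le hp n ω).trans (by gcongr)
    _ = _ := by rw [Real.rpow_add this]; field_simp

theorem ae_isLittleO_sum_compensatedPow (hZ : IsPotential F ξ G Z A b g)
    (hξ : IsMomentNoise μ F ξ σ a) (hτ : IsClock μ F τ) (hp : p ≠ 0) (ha : 2 * p < a)
    (hgrow : HasModerateGrowth μ τ g fun n ω => Z n ω ^ p) {r : ℕ} (hr : r ≤ 2 * p)
    {X : ℕ → Ω → ℝ} (hX : ∀ n, Measurable[F n] (X n)) {C : ℝ} (hC : 0 ≤ C)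
    (hXle : ∀ n ω, |X n ω| ≤ C * (g n ω * (1 + Z n ω ^ (p - 1)))) :
    ∀ᵐ ω ∂μ, (fun n => ∑ k ∈ range n, X k ω * compensatedPow μ F ξ r k ω) =o[atTop] (τ · ω) := by
  obtain ⟨s, h1, h2, has, hps⟩ := exists_one_lt_mul_le hp ha
  have hr' : (r : ℝ) ≤ 2 * p := by exact_mod_cast hr
  have hrs : r * s ≤ a := (mul_le_mul_of_nonneg_right hr' (by linarith)).trans has
  have hra : r ≤ a := (le_mul_of_one_le_right r.cast_nonneg h1.le).trans hrs
  refine ae_isLittleO_sum_mul (s := s) (θ := (1 + s) / 2) h1.le h2 (by linarith) (by linarith) hτ hX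
    (hξ.measurable_compensatedPow r) (hξ.condCentered_compensatedPow hra)
    (hξ.condBounded_compensatedPow h1.le h2 hrs) ?_
  filter_upwards [hgrow ((1 + s) / 2) (by linarith)] with ω ⟨_, hsum⟩
  refine .of_nonneg_of_le (fun n => div_nonneg (by positivity)
    (Real.rpow_nonneg (hτ.pos n ω).le _)) (fun n => ?_) (hsum.mul_left (8 * C ^ s * G ^ (s - 1)))
  rw [← mul_div_assoc]
  exact div_le_div_of_nonneg_right (abs_rpow_le_of_abs_le h1 h2 hps hC (hZ.gain_nonneg n ω)
    (hZ.gain_le n ω) (hZ.nonneg n ω) (hXle n ω)) (Real.rpow_nonneg (hτ.pos n ω).le _)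

theorem ae_isLittleO_sum_remainder (hZ : IsPotential F ξ G Z A b g) (hξ : IsMomentNoise μ F ξ σ a)
    (hτ : IsClock μ F τ) (hp : p ≠ 0) (ha : 2 * p < a)
    (hgrow : HasModerateGrowth μ τ g fun n ω => Z n ω ^ p)
    (hg : ∀ᵐ ω ∂μ, Tendsto (g · ω) atTop (𝓝 0))
    (hmean : ∀ᵐ ω ∂μ, (fun n => ∑ k ∈ range n, g k ω * (1 + Z k ω ^ (p - 1))) =O[atTop] (τ · ω))
    {R : ℕ → Ω → ℝ} {C : ℝ} (hR : ∀ n ω, |R n ω| ≤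
      C * (g n ω * √(g n ω) * (1 + A n ω ^ (p - 1)) * (1 + |ξ n ω| ^ (2 * p)))) :
    ∀ᵐ ω ∂μ, (fun n => ∑ k ∈ range n, R k ω) =o[atTop] (τ · ω) := by
  let X : ℕ → Ω → ℝ := fun n ω => g n ω * √(g n ω) * (1 + A n ω ^ (p - 1))
  let E : ℕ → Ω → ℝ := fun n => μ[fun ω => |ξ n ω| ^ (2 * p) | F n]
  have hX0 : ∀ n ω, 0 ≤ X n ω := fun n ω => by
    have := hZ.gain_nonneg n ω
    have := hZ.base_nonneg n ω
    positivity
  have hX : ∀ n ω, X n ω ≤ √(g n ω) * (g n ω * (1 + Z n ω ^ (p - 1))) := fun n ω => by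
    have := hZ.gain_nonneg n ω
    have := hZ.base_nonneg n ω
    have := hZ.base_le n ω
    calc X n ω ≤ g n ω * √(g n ω) * (1 + Z n ω ^ (p - 1)) := by simp only [X]; gcongr
      _ = _ := by ring
  have hXm : ∀ n, Measurable[F n] (X n) := fun n => by
    have := hZ.measurable_base n
    have := hZ.measurable_gain n
    fun_prop
  have hnoise := hZ.ae_isLittleO_sum_compensatedPow hξ hτ hp ha hgrow le_rfl hXm
    (Real.sqrt_nonneg G) fun n ω => by
      have h0 : 0 ≤ g n ω * (1 + Z n ω ^ (p - 1)) :=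
        mul_nonneg (hZ.gain_nonneg n ω) (by have := hZ.nonneg n ω; positivity)
      rw [abs_of_nonneg (hX0 n ω)]
      exact (hX n ω).trans (mul_le_mul_of_nonneg_right (Real.sqrt_le_sqrt (hZ.gain_le n ω)) h0)
  filter_upwards [hnoise, hg, hmean, hτ.tendsto, condExp_abs_pow_nonneg (F := F) ξ (2 * p),
    hξ.condExp_pow_le (r := 2 * p) (by exact_mod_cast ha.le)] with ω hnoise hg hmean hτt hE0 ⟨K, hK⟩
  have hcomp : (fun n => X n ω * (1 + E n ω)) =o[atTop] fun n => g n ω * (1 + Z n ω ^ (p - 1)) :=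
    isLittleO_mul_one_add_of_le_mul (by simpa using hg.sqrt) (hX0 · ω) (hX · ω) hE0 hK
  have hcomp' := isLittleO_sum_range_of_isBigO hcomp (fun n => mul_nonneg (hZ.gain_nonneg n ω)
    (by have := hZ.nonneg n ω; positivity)) (hτ.monotone ω) hτt hmean
  refine isLittleO_sum_range_of_abs_le (hR · ω) ((hcomp'.add hnoise).congr_left fun n => ?_)
  rw [← sum_add_distrib]
  refine sum_congr rfl fun k _ => ?_
  simp only [X, E, compensatedPow, Pi.sub_apply]
  ring

theorem ae_isLittleO_pow_add_sum_sub (hZ : IsPotential F ξ G Z A b g)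
    (hξ : IsMomentNoise μ F ξ σ a) (hτ : IsClock μ F τ) (hp : p ≠ 0) (ha : 2 * p < a)
    (hgrow : HasModerateGrowth μ τ g fun n ω => Z n ω ^ p)
    (hg : ∀ᵐ ω ∂μ, Tendsto (g · ω) atTop (𝓝 0))
    (hmean : ∀ᵐ ω ∂μ, (fun n => ∑ k ∈ range n, g k ω * (1 + Z k ω ^ (p - 1))) =O[atTop] (τ · ω)) :
    ∀ᵐ ω ∂μ, (fun n => Z n ω ^ p + ∑ k ∈ range n, (Z k ω ^ p - A k ω ^ p) -
      σ ^ 2 * ∑ k ∈ range n, quadCoeff p (A k ω) (b k ω) (g k ω)) =o[atTop] (τ · ω) := by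
  obtain ⟨C, -, hexp⟩ := exists_abs_pow_expansion_le p (G := G)
  let Q : ℕ → Ω → ℝ := fun n ω => quadCoeff p (A n ω) (b n ω) (g n ω)
  have hQm : ∀ n, Measurable[F n] (Q n) := fun n => by
    have := hZ.measurable_base n
    have := hZ.measurable_cross n
    have := hZ.measurable_gain n
    simp only [Q, quadCoeff]
    fun_prop
  have hQle : ∀ n ω, |Q n ω| ≤ 2 * p ^ 2 * (g n ω * (1 + Z n ω ^ (p - 1))) := fun n ω => by
    have hA := hZ.base_nonneg n ω
    have hg := hZ.gain_nonneg n ω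
    rw [abs_of_nonneg (quadCoeff_nonneg hA hg)]
    refine (quadCoeff_le hA hg (hZ.sq_cross_le n ω)).trans ?_
    gcongr
    exact (pow_le_pow_left₀ hA (hZ.base_le n ω) _).trans (by linarith)
  have hp1 : (1 : ℝ) ≤ p := mod_cast Nat.one_le_iff_ne_zero.mpr hp
  have hrem := hZ.ae_isLittleO_sum_remainder hξ hτ hp ha hgrow hg hmean
    (R := fun n ω => Z (n + 1) ω ^ p - A n ω ^ p - 2 * p * A n ω ^ (p - 1) * b n ω * ξ n ω -
      Q n ω * ξ n ω ^ 2) (C := C) fun n ω => by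
      rw [hZ.succ_eq]
      exact hexp _ _ _ _ (hZ.base_nonneg n ω) (hZ.gain_nonneg n ω) (hZ.gain_le n ω)
        (hZ.sq_cross_le n ω)
  filter_upwards [hrem, hZ.ae_isLittleO_sum_linear hξ hτ hp (by linarith) hgrow,
    hZ.ae_isLittleO_sum_compensatedPow hξ hτ hp ha hgrow (r := 2) (by omega) hQm (by positivity)
      hQle,
    hτ.tendsto, ae_all_iff.mpr hξ.condExp_sq] with ω hrem hlin hquad hτt hsq
  refine (((isLittleO_const_of_tendsto_atTop hτt (Z 0 ω ^ p)).add hlin).add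
    (hquad.add hrem)).congr_left fun n => ?_
  have hcomp : ∀ k, compensatedPow μ F ξ 2 k ω = ξ k ω ^ 2 - σ ^ 2 := fun k => by
    simp only [compensatedPow, sq_abs, Pi.sub_apply, hsq k]
  have htel := sum_range_sub (fun k => Z k ω ^ p) n
  rw [sum_sub_distrib] at htel
  simp only [Q, hcomp, mul_sub, sum_sub_distrib, ← sum_mul, mul_comm (σ ^ 2)]
  linarith

end IsPotential

end Expansion

section PathAsymptotics

open Asymptotics

lemma abs_le_add_mul_of_contraction {r e t γ : ℕ → ℝ} {j η : ℝ} {N : ℕ} (hj : 1 ≤ j)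
    (hη : 0 ≤ η) (hγ : ∀ n, 0 ≤ γ n) (ht : ∀ n, 0 ≤ t n) (ht_succ : ∀ n, t (n + 1) = t n + γ n)
    (hr_succ : ∀ n, r (n + 1) = (1 - j * γ n) * r n + γ n * e n)
    (hN : ∀ n, N ≤ n → |e n| ≤ η * t n ∧ j * γ n ≤ 1) {n : ℕ} (hn : N ≤ n) :
    |r n| ≤ |r N| + η * t n := by
  induction n, hn using Nat.le_induction with
  | base => exact le_add_of_nonneg_right (mul_nonneg hη (ht N))
  | succ n hn ih =>
    obtain ⟨he, hjγ⟩ := hN n hn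
    have hγn := hγ n
    have hstep : |r (n + 1)| ≤ (1 - j * γ n) * (|r N| + η * t n) + γ n * (η * t n) := by
      rw [hr_succ]
      refine (abs_add_le _ _).trans ?_
      rw [abs_mul, abs_mul, abs_of_nonneg (sub_nonneg.mpr hjγ), abs_of_nonneg hγn]
      have := sub_nonneg.mpr hjγ
      gcongr
    have hγt : 0 ≤ γ n * (η * t n) := mul_nonneg hγn (mul_nonneg hη (ht n))
    have hγr : 0 ≤ j * γ n * |r N| := by positivity
    rw [ht_succ]
    linarith [le_mul_of_one_le_left hγt hj, mul_nonneg hη hγn]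

/-- The deviation `r n = ∑ γ * w - l * ∑ γ` obeys a recursion with contraction factor `1 - j * γ n`,
whose source is the assumed `o(∑ γ)`. -/
lemma isLittleO_sum_mul_sub_of_add {γ w : ℕ → ℝ} {j l : ℝ} (hj : 1 ≤ j) (h0 : ∀ n, 0 ≤ γ n)
    (hγ : Tendsto γ atTop (𝓝 0)) (ht : Tendsto (fun n => ∑ k ∈ range n, γ k) atTop atTop)
    (h : (fun n => w n + j * (∑ k ∈ range n, γ k * w k - l * ∑ k ∈ range n, γ k))
      =o[atTop] fun n => ∑ k ∈ range n, γ k) :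
    (fun n => ∑ k ∈ range n, γ k * w k - l * ∑ k ∈ range n, γ k)
      =o[atTop] fun n => ∑ k ∈ range n, γ k := by
  set t : ℕ → ℝ := fun n => ∑ k ∈ range n, γ k
  set r : ℕ → ℝ := fun n => ∑ k ∈ range n, γ k * w k - l * t n with hr_def
  have ht0 : ∀ n, 0 ≤ t n := fun n => sum_nonneg fun k _ => h0 k
  have ht_succ : ∀ n, t (n + 1) = t n + γ n := fun n => sum_range_succ _ _
  have hr_succ : ∀ n, r (n + 1) = (1 - j * γ n) * r n + γ n * (w n + j * r n - l) := fun n => by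
    simp only [hr_def, ht_succ, sum_range_succ _ n]
    ring
  refine isLittleO_iff.mpr fun η hη => ?_
  have hsmall : ∀ᶠ n in atTop, j * γ n ≤ 1 :=
    (by simpa using hγ.const_mul j : Tendsto (fun n => j * γ n) atTop (𝓝 0)).eventually_le_const
      one_pos
  obtain ⟨N, hN⟩ := eventually_atTop.mp
    ((isLittleO_iff.mp (h.sub (isLittleO_const_of_tendsto_atTop ht l)) (half_pos hη)).and hsmall)
  have hbound : ∀ n, N ≤ n → |r n| ≤ |r N| + η / 2 * t n := fun n hn =>
    abs_le_add_mul_of_contraction hj (half_pos hη).le h0 ht0 ht_succ hr_succ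
      (fun n hn => (hN n hn).imp_left fun hw => by
        rwa [Real.norm_eq_abs, Real.norm_of_nonneg (ht0 n)] at hw) hn
  filter_upwards [eventually_ge_atTop N, ht.eventually_ge_atTop (2 * |r N| / η)] with n hn hnt
  rw [Real.norm_eq_abs, Real.norm_of_nonneg (ht0 n)]
  rw [div_le_iff₀ hη] at hnt
  linarith [hbound n hn]

lemma isLittleO_pow_sub_pow_sub {u v w : ℕ → ℝ} (hu : u ~[atTop] w) (hv : v ~[atTop] w) (p : ℕ) :
    (fun n => u n ^ p - v n ^ p - p * ((u n - v n) * w n ^ (p - 1)))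
      =o[atTop] fun n => (u n - v n) * w n ^ (p - 1) := by
  have hterm : ∀ i ∈ range p, (fun n => u n ^ i * v n ^ (p - 1 - i) - w n ^ (p - 1))
      =o[atTop] fun n => w n ^ (p - 1) := fun i hi => by
    have hi' : i + (p - 1 - i) = p - 1 := by have := mem_range.mp hi; omega
    have hmul : u ^ i * v ^ (p - 1 - i) ~[atTop] w ^ i * w ^ (p - 1 - i) :=
      (hu.pow i).mul (hv.pow _)
    rw [← pow_add, hi'] at hmul
    exact hmul.isLittleO
  refine ((isBigO_refl (fun n => u n - v n) atTop).mul_isLittleO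
    (IsLittleO.sum hterm)).congr_left fun n => ?_
  rw [Finset.sum_apply, sum_sub_distrib, sum_const, card_range, nsmul_eq_mul, mul_sub,
    ← (Commute.all (u n) (v n)).geom_sum₂_mul]
  ring

lemma isBigO_of_sub_const_mul_isLittleO {x t : ℕ → ℝ} {m : ℝ}
    (hx : (fun n => x n - m * t n) =o[atTop] t) : x =O[atTop] t :=
  (hx.isBigO.add (isBigO_const_mul_self m t atTop)).congr_left fun _ => sub_add_cancel _ _

lemma sum_const_mul_one_add_isBigO {γ y : ℕ → ℝ} (D : ℝ)
    (hO : (fun n => ∑ k ∈ range n, γ k * y k) =O[atTop] fun n => ∑ k ∈ range n, γ k) :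
    (fun n => ∑ k ∈ range n, D * γ k * (1 + y k)) =O[atTop] fun n => ∑ k ∈ range n, γ k := by
  refine (((isBigO_refl _ _).add hO).const_mul_left D).congr_left fun n => ?_
  rw [← sum_add_distrib, mul_sum]
  exact sum_congr rfl fun k _ => by ring

lemma isEquivalent_one_sub_mul {γ : ℕ → ℝ} (hγ : Tendsto γ atTop (𝓝 0)) (W : ℕ → ℝ) :
    (fun n => (1 - γ n) * W n) ~[atTop] W :=
  ((((isLittleO_one_iff ℝ).mpr hγ).mul_isBigO (isBigO_refl W atTop)).neg_left).congr
    (fun n => by rw [Pi.sub_apply]; ring) fun n => one_mul _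

lemma isLittleO_quadCoeff_sub {A W b b' g γ : ℕ → ℝ} {D : ℝ} (hA : A ~[atTop] W)
    (hg : (fun n => g n - D * γ n) =o[atTop] γ)
    (hb : (fun n => b n ^ 2) =O[atTop] fun n => γ n * W n)
    (hb' : (fun n => b' n ^ 2 - b n ^ 2) =o[atTop] fun n => γ n * W n) (q : ℕ) :
    (fun n => quadCoeff (q + 1) (A n) (b' n) (g n) - quadCoeff (q + 1) (W n) (b n) (D * γ n))
      =o[atTop] fun n => γ n * W n ^ q := by
  have hgain : (fun n => A n ^ q * g n - W n ^ q * (D * γ n)) =o[atTop] fun n => γ n * W n ^ q := by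
    have hAq : (fun n => A n ^ q) =O[atTop] fun n => W n ^ q := (hA.pow q).isBigO
    refine ((hAq.mul_isLittleO hg).add ((hA.pow q).isLittleO.mul_isBigO
      (isBigO_const_mul_self D γ atTop))).congr (fun n => ?_) fun n => mul_comm _ _
    simp only [Pi.pow_apply, Pi.sub_apply]
    ring
  have hcross : (fun n => q * (A n ^ (q - 1) * b' n ^ 2 - W n ^ (q - 1) * b n ^ 2))
      =o[atTop] fun n => γ n * W n ^ q := by
    rcases q with _ | q
    · simp
    have hAq : (fun n => A n ^ q) =O[atTop] fun n => W n ^ q := (hA.pow q).isBigO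
    refine (((hAq.mul_isLittleO hb').add ((hA.pow q).isLittleO.mul_isBigO hb)).const_mul_left
      ((q + 1 : ℕ) : ℝ)).congr (fun n => ?_) fun n => ?_
    · simp only [Pi.pow_apply, Pi.sub_apply, Nat.add_sub_cancel]
      ring
    · ring
  refine ((hgain.const_mul_left ((q : ℝ) + 1)).add
    (hcross.const_mul_left (2 * ((q : ℝ) + 1)))).congr_left fun n => ?_
  simp only [quadCoeff, Nat.cast_add, Nat.cast_one, Nat.add_sub_cancel,
    show q + 1 - 2 = q - 1 by omega]
  ring

/-- Two potentials along one path: `W`, contracted by `1 - γ` at each step and with cross terms `b`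
and gains `D * γ`, and `V`, with bases `Q`, cross terms `c` and gains `f`, which are asymptotically
equivalent but lose mass differently: `γ * W` for the former, essentially `b ^ 2` for the latter. -/
structure PathComparison (D : ℝ) (γ W b V Q c f : ℕ → ℝ) : Prop where
  rate_nonneg : ∀ n, 0 ≤ γ n
  rate_le_one : ∀ n, γ n ≤ 1
  rate_tendsto : Tendsto γ atTop (𝓝 0)
  tendsto_sum_rate : Tendsto (fun n => ∑ k ∈ range n, γ k) atTop atTop
  nonneg : ∀ n, 0 ≤ W n
  sq_cross_isBigO : (fun n => b n ^ 2) =O[atTop] fun n => γ n * W n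
  isEquivalent : V ~[atTop] W
  base_isEquivalent : Q ~[atTop] W
  gain_isLittleO : (fun n => f n - D * γ n) =o[atTop] γ
  sq_cross_isLittleO : (fun n => c n ^ 2 - b n ^ 2) =o[atTop] fun n => γ n * W n
  loss_isLittleO : (fun n => V n - Q n - b n ^ 2) =o[atTop] fun n => γ n * W n

/-- Asymptotic equality, with common linear rate `m` in the accumulated `γ`, of the sums of
`γ * W ^ q` and (for `q ≠ 0`) of `b ^ 2 * W ^ (q - 1)`. -/
def HasMomentRate (γ W b : ℕ → ℝ) (q : ℕ) (m : ℝ) : Prop :=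
  (fun n => ∑ k ∈ range n, γ k * W k ^ q - m * ∑ k ∈ range n, γ k)
      =o[atTop] (fun n => ∑ k ∈ range n, γ k) ∧
    (fun n => q * (∑ k ∈ range n, b k ^ 2 * W k ^ (q - 1) - m * ∑ k ∈ range n, γ k))
      =o[atTop] (fun n => ∑ k ∈ range n, γ k)

lemma hasMomentRate_zero (γ W b : ℕ → ℝ) : HasMomentRate γ W b 0 1 := by
  simp [HasMomentRate]

namespace PathComparison

variable {D : ℝ} {γ W b V Q c f : ℕ → ℝ}

lemma contraction_isEquivalent (h : PathComparison D γ W b V Q c f) :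
    (fun n => (1 - γ n) * W n) ~[atTop] W :=
  isEquivalent_one_sub_mul h.rate_tendsto W

lemma isLittleO_sum (h : PathComparison D γ W b V Q c f) {q : ℕ} {y : ℕ → ℝ}
    (hy : y =o[atTop] fun n => γ n * W n ^ q)
    (hO : (fun n => ∑ k ∈ range n, γ k * W k ^ q) =O[atTop] fun n => ∑ k ∈ range n, γ k) :
    (fun n => ∑ k ∈ range n, y k) =o[atTop] fun n => ∑ k ∈ range n, γ k :=
  isLittleO_sum_range_of_isBigO hy
    (fun n => mul_nonneg (h.rate_nonneg n) (pow_nonneg (h.nonneg n) q))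
    (monotone_nat_of_le_succ fun n => by
      rw [sum_range_succ]
      exact le_add_of_nonneg_right (h.rate_nonneg n)) h.tendsto_sum_rate hO

lemma isLittleO_sum_quadCoeff (h : PathComparison D γ W b V Q c f) {q : ℕ} {m σ : ℝ}
    (hm : HasMomentRate γ W b q m) {A b' g : ℕ → ℝ} (hA : A ~[atTop] W)
    (hg : (fun n => g n - D * γ n) =o[atTop] γ)
    (hb' : (fun n => b' n ^ 2 - b n ^ 2) =o[atTop] fun n => γ n * W n) :
    (fun n => σ ^ 2 * ∑ k ∈ range n, quadCoeff (q + 1) (A k) (b' k) (g k) -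
      (q + 1) * (σ ^ 2 * (D + 2 * q) * m * ∑ k ∈ range n, γ k))
      =o[atTop] fun n => ∑ k ∈ range n, γ k := by
  have hdiff := h.isLittleO_sum (isLittleO_quadCoeff_sub hA hg h.sq_cross_isBigO hb' q)
    (isBigO_of_sub_const_mul_isLittleO hm.1)
  refine ((hdiff.const_mul_left (σ ^ 2)).add ((hm.1.const_mul_left (σ ^ 2 * (q + 1) * D)).add
    (hm.2.const_mul_left (σ ^ 2 * (2 * (q + 1)))))).congr_left fun n => ?_
  have hsum : ∑ k ∈ range n, quadCoeff (q + 1) (W k) (b k) (D * γ k) =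
      (q + 1) * D * ∑ k ∈ range n, γ k * W k ^ q +
        2 * (q + 1) * q * ∑ k ∈ range n, b k ^ 2 * W k ^ (q - 1) := by
    rw [mul_sum, mul_sum, ← sum_add_distrib]
    refine sum_congr rfl fun k _ => ?_
    simp only [quadCoeff, Nat.cast_add, Nat.cast_one, Nat.add_sub_cancel,
      show q + 1 - 2 = q - 1 by omega]
    ring
  rw [sum_sub_distrib, hsum]
  ring

lemma isLittleO_pow_succ_and_sum_rate_mul_pow (h : PathComparison D γ W b V Q c f) {q : ℕ} {m σ : ℝ}
    (hm : HasMomentRate γ W b q m)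
    (hW : (fun n => W n ^ (q + 1) + ∑ k ∈ range n, (W k ^ (q + 1) - ((1 - γ k) * W k) ^ (q + 1)) -
      σ ^ 2 * ∑ k ∈ range n, quadCoeff (q + 1) ((1 - γ k) * W k) (b k) (D * γ k))
      =o[atTop] fun n => ∑ k ∈ range n, γ k) :
    (fun n => W n ^ (q + 1)) =o[atTop] (fun n => ∑ k ∈ range n, γ k) ∧
    (fun n => ∑ k ∈ range n, γ k * W k ^ (q + 1) -
      σ ^ 2 * (D + 2 * q) * m * ∑ k ∈ range n, γ k) =o[atTop] fun n => ∑ k ∈ range n, γ k := by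
  have hquad := h.isLittleO_sum_quadCoeff (σ := σ) (b' := b) (g := fun n => D * γ n) hm
    h.contraction_isEquivalent (by simp) (by simp)
  have hloss := hW.add hquad
  have hO : (fun n => ∑ k ∈ range n, γ k * W k ^ (q + 1))
      =O[atTop] fun n => ∑ k ∈ range n, γ k := by
    refine IsBigO.trans (.of_norm_le fun n => ?_) (isBigO_of_sub_const_mul_isLittleO
      (x := fun n => W n ^ (q + 1) + ∑ k ∈ range n, (W k ^ (q + 1) - ((1 - γ k) * W k) ^ (q + 1)))
      (m := (q + 1) * (σ ^ 2 * (D + 2 * q) * m)) (hloss.congr_left fun n => by ring))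
    rw [Real.norm_of_nonneg (sum_nonneg fun k _ =>
      mul_nonneg (h.rate_nonneg k) (pow_nonneg (h.nonneg k) _))]
    refine le_add_of_nonneg_of_le (pow_nonneg (h.nonneg n) _) (sum_le_sum fun k _ => ?_)
    have hpow : (1 - γ k) ^ (q + 1) ≤ 1 - γ k := pow_le_of_le_one
      (sub_nonneg.mpr (h.rate_le_one k)) (sub_le_self _ (h.rate_nonneg k)) q.succ_ne_zero
    rw [mul_pow]
    linarith [mul_le_mul_of_nonneg_right hpow (pow_nonneg (h.nonneg k) (q + 1))]
  have hexpand := h.isLittleO_sum (q := q + 1) (((isLittleO_pow_sub_pow_sub IsEquivalent.refl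
    h.contraction_isEquivalent (q + 1)).congr_right fun n => by
      rw [Nat.add_sub_cancel]
      ring)) hO
  have hrec : (fun n => W n ^ (q + 1) + (q + 1 : ℝ) * (∑ k ∈ range n, γ k * W k ^ (q + 1) -
      σ ^ 2 * (D + 2 * q) * m * ∑ k ∈ range n, γ k)) =o[atTop] fun n => ∑ k ∈ range n, γ k := by
    refine (hloss.sub hexpand).congr_left fun n => ?_
    simp only [sum_sub_distrib, ← mul_sum, Nat.add_sub_cancel, Nat.cast_add, Nat.cast_one,
      show ∀ k, (W k - (1 - γ k) * W k) * W k ^ q = γ k * W k ^ (q + 1) from fun k => by ring]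
    ring
  have hrate := isLittleO_sum_mul_sub_of_add (le_add_of_nonneg_left q.cast_nonneg) h.rate_nonneg
    h.rate_tendsto h.tendsto_sum_rate hrec
  exact ⟨(hrec.sub (hrate.const_mul_left _)).congr_left fun n => add_sub_cancel_right _ _, hrate⟩

lemma isLittleO_sum_sq_cross_mul_pow (h : PathComparison D γ W b V Q c f) {q : ℕ} {m σ : ℝ}
    (hm : HasMomentRate γ W b q m)
    (hO : (fun n => ∑ k ∈ range n, γ k * W k ^ (q + 1)) =O[atTop] fun n => ∑ k ∈ range n, γ k)
    (hW : (fun n => W n ^ (q + 1)) =o[atTop] fun n => ∑ k ∈ range n, γ k)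
    (hV : (fun n => V n ^ (q + 1) + ∑ k ∈ range n, (V k ^ (q + 1) - Q k ^ (q + 1)) -
      σ ^ 2 * ∑ k ∈ range n, quadCoeff (q + 1) (Q k) (c k) (f k))
      =o[atTop] fun n => ∑ k ∈ range n, γ k) :
    (fun n => ∑ k ∈ range n, b k ^ 2 * W k ^ q -
      σ ^ 2 * (D + 2 * q) * m * ∑ k ∈ range n, γ k) =o[atTop] fun n => ∑ k ∈ range n, γ k := by
  have hlossO : (fun n => V n - Q n) =O[atTop] fun n => γ n * W n :=
    (h.loss_isLittleO.isBigO.add h.sq_cross_isBigO).congr_left fun _ => sub_add_cancel _ _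
  have hWq := isBigO_refl (fun n => W n ^ q) atTop
  have hexpand := isLittleO_pow_sub_pow_sub h.isEquivalent h.base_isEquivalent (q + 1)
  rw [Nat.add_sub_cancel] at hexpand
  have hlinear := (h.loss_isLittleO.mul_isBigO hWq).const_mul_left ((q + 1 : ℕ) : ℝ)
  have hsum := h.isLittleO_sum (q := q + 1) (((hexpand.trans_isBigO (hlossO.mul hWq)).add
    hlinear).congr_right fun n => by ring) hO
  have hquad := h.isLittleO_sum_quadCoeff (σ := σ) hm h.base_isEquivalent h.gain_isLittleO
    h.sq_cross_isLittleO
  have hVq : (fun n => V n ^ (q + 1)) =o[atTop] fun n => ∑ k ∈ range n, γ k :=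
    (h.isEquivalent.pow (q + 1)).isBigO.trans_isLittleO hW
  refine ((((hV.add hquad).sub hVq).sub hsum).const_mul_left ((q + 1 : ℝ)⁻¹)).congr_left
    fun n => ?_
  simp only [sum_add_distrib, sum_sub_distrib, ← mul_sum, sub_mul, mul_sub, Nat.cast_add,
    Nat.cast_one]
  field_simp
  ring

theorem hasMomentRate_succ (h : PathComparison D γ W b V Q c f) {q : ℕ} {m σ : ℝ}
    (hm : HasMomentRate γ W b q m)
    (hW : (fun n => W n ^ (q + 1) + ∑ k ∈ range n, (W k ^ (q + 1) - ((1 - γ k) * W k) ^ (q + 1)) -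
      σ ^ 2 * ∑ k ∈ range n, quadCoeff (q + 1) ((1 - γ k) * W k) (b k) (D * γ k))
      =o[atTop] fun n => ∑ k ∈ range n, γ k)
    (hV : (fun n => V n ^ (q + 1) + ∑ k ∈ range n, (V k ^ (q + 1) - Q k ^ (q + 1)) -
      σ ^ 2 * ∑ k ∈ range n, quadCoeff (q + 1) (Q k) (c k) (f k))
      =o[atTop] fun n => ∑ k ∈ range n, γ k) :
    HasMomentRate γ W b (q + 1) (σ ^ 2 * (D + 2 * q) * m) := by
  obtain ⟨hWq, hrate⟩ := h.isLittleO_pow_succ_and_sum_rate_mul_pow hm hW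
  have hcross :=
    h.isLittleO_sum_sq_cross_mul_pow hm (isBigO_of_sub_const_mul_isLittleO hrate) hWq hV
  exact ⟨hrate, hcross.const_mul_left _⟩

lemma isLittleO_sum_gain_mul_pow_sub (h : PathComparison D γ W b V Q c f) {q : ℕ}
    (hO : (fun n => ∑ k ∈ range n, γ k * W k ^ q) =O[atTop] fun n => ∑ k ∈ range n, γ k) :
    (fun n => ∑ k ∈ range n, f k * V k ^ q - D * ∑ k ∈ range n, γ k * W k ^ q)
      =o[atTop] fun n => ∑ k ∈ range n, γ k := by
  have hVq := h.isEquivalent.pow q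
  have hterm : (fun n => (f n - D * γ n) * V n ^ q + D * γ n * (V n ^ q - W n ^ q))
      =o[atTop] fun n => γ n * W n ^ q :=
    (h.gain_isLittleO.mul_isBigO hVq.isBigO).add
      ((isBigO_const_mul_self D γ atTop).mul_isLittleO hVq.isLittleO)
  refine (h.isLittleO_sum hterm hO).congr_left fun n => ?_
  rw [mul_sum, ← sum_sub_distrib]
  exact sum_congr rfl fun k _ => by ring

lemma sum_gain_mul_one_add_pow_isBigO (h : PathComparison D γ W b V Q c f) {q : ℕ}
    (hO : (fun n => ∑ k ∈ range n, γ k * W k ^ q) =O[atTop] fun n => ∑ k ∈ range n, γ k) :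
    (fun n => ∑ k ∈ range n, f k * (1 + V k ^ q)) =O[atTop] fun n => ∑ k ∈ range n, γ k := by
  have hsum : ∀ r : ℕ, (fun n => ∑ k ∈ range n, γ k * W k ^ r) =O[atTop]
      (fun n => ∑ k ∈ range n, γ k) →
      (fun n => ∑ k ∈ range n, f k * V k ^ r) =O[atTop] fun n => ∑ k ∈ range n, γ k :=
    fun r hr => ((h.isLittleO_sum_gain_mul_pow_sub hr).isBigO.add (hr.const_mul_left D)).congr_left
      fun n => sub_add_cancel _ _
  refine ((hsum 0 (by simpa using isBigO_refl _ _)).add (hsum q hO)).congr_left fun n => ?_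
  rw [← sum_add_distrib]
  exact sum_congr rfl fun k _ => by ring

lemma gain_isBigO (h : PathComparison D γ W b V Q c f) : f =O[atTop] γ :=
  isBigO_of_sub_const_mul_isLittleO h.gain_isLittleO

lemma gain_tendsto (h : PathComparison D γ W b V Q c f) : Tendsto f atTop (𝓝 0) :=
  h.gain_isBigO.trans_tendsto h.rate_tendsto

end PathComparison

end PathAsymptotics

section MomentRates

variable {Ω : Type*} {m0 : MeasurableSpace Ω} {μ : Measure Ω} {F : Filtration ℕ m0}
  {ξ : ℕ → Ω → ℝ} {σ a D G : ℝ} {γ τ g g' Y Y' W b V Q c f : ℕ → Ω → ℝ}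

open Asymptotics in
lemma HasModerateGrowth.of_isBigO (h : HasModerateGrowth μ τ g Y) (hτ : IsClock μ F τ)
    (hY0 : ∀ n ω, 0 ≤ Y n ω) (hY : ∀ᵐ ω ∂μ, (Y' · ω) =O[atTop] (Y · ω))
    (hg : ∀ᵐ ω ∂μ, (g' · ω) =O[atTop] (g · ω)) : HasModerateGrowth μ τ g' Y' := fun θ hθ => by
  filter_upwards [h θ hθ, hY, hg] with ω ⟨⟨K, hK⟩, hsum⟩ hY hg
  have hτ0 : ∀ n, 0 < τ n ω ^ θ := fun n => Real.rpow_pos_of_pos (hτ.pos n ω) θ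
  have hle : ∀ n, Y n ω ≤ 1 + Y n ω := fun n => le_add_of_nonneg_left zero_le_one
  constructor
  · have hYτ : (Y · ω) =O[atTop] fun n => τ n ω ^ θ := .of_bound K <| .of_forall fun n => by
      rw [Real.norm_of_nonneg (hY0 n ω), Real.norm_of_nonneg (hτ0 n).le]
      exact hK n
    obtain ⟨C, -, hC⟩ := bound_of_isBigO_nat_atTop (hY.trans hYτ)
    refine ⟨C, fun n => (le_abs_self _).trans ?_⟩
    simpa only [Real.norm_eq_abs, abs_of_pos (hτ0 n)] using hC (hτ0 n).ne'
  · have hone : (fun n => 1 + Y' n ω) =O[atTop] fun n => 1 + Y n ω := by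
      refine .add (.of_norm_le fun n => ?_) (hY.trans (.of_norm_le fun n => ?_))
      · rw [norm_one]
        exact le_add_of_nonneg_right (hY0 n ω)
      · rw [Real.norm_of_nonneg (hY0 n ω)]
        exact hle n
    exact summable_of_isBigO_nat hsum
      (((hg.mul hone).mul (isBigO_refl (fun n => (τ n ω ^ θ)⁻¹) atTop)))

lemma IsPotential.hasModerateGrowth_clock [IsProbabilityMeasure μ]
    (hW : IsPotential F ξ D W (fun n ω => (1 - γ n ω) * W n ω) b fun n ω => D * γ n ω)
    (hξ : IsMomentNoise μ F ξ σ a) (hγ : ∀ n, Measurable[F n] (γ n)) (hγ0 : ∀ n ω, 0 ≤ γ n ω)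
    (hD : 0 ≤ D) {p : ℕ} (hp : p ≠ 0) (hpa : 2 * p ≤ a) :
    HasModerateGrowth μ (clock γ) γ fun n ω => W n ω ^ p := fun θ hθ => by
  filter_upwards [hW.ae_pow_le_clock_rpow_and_summable hξ hp hpa hγ hγ0 hD (fun _ _ => le_rfl)
    (fun _ _ => le_rfl) hθ] with ω ⟨hK, hsum⟩
  exact ⟨hK, ((summable_div_clock_rpow hγ0 hθ ω).add hsum).congr fun n => by ring⟩

open Asymptotics in
lemma clock_isBigO_sum {ω : Ω} (hγ0 : ∀ n, 0 ≤ γ n ω) (hγ1 : ∀ n, γ n ω ≤ 1)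
    (ht : Tendsto (fun n => ∑ k ∈ range n, γ k ω) atTop atTop) :
    (clock γ · ω) =O[atTop] fun n => ∑ k ∈ range n, γ k ω := by
  have hle : (clock γ · ω) =O[atTop] fun n => 2 + ∑ k ∈ range n, γ k ω := .of_norm_le fun n => by
    have := sum_nonneg fun k (_ : k ∈ range (n + 1)) => hγ0 k
    rw [clock, Real.norm_of_nonneg (by positivity), sum_range_succ]
    linarith [hγ1 n]
  exact hle.trans ((isLittleO_const_of_tendsto_atTop ht 2).isBigO.add (isBigO_refl _ _))

open Asymptotics in
lemma sum_isBigO_clock {ω : Ω} (hγ0 : ∀ n, 0 ≤ γ n ω) :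
    (fun n => ∑ k ∈ range n, γ k ω) =O[atTop] (clock γ · ω) := .of_norm_le fun n => by
  rw [clock, Real.norm_of_nonneg (sum_nonneg fun k _ => hγ0 k), sum_range_succ]
  linarith [hγ0 n]

open Asymptotics in
theorem ae_hasMomentRate [IsProbabilityMeasure μ]
    (hW : IsPotential F ξ D W (fun n ω => (1 - γ n ω) * W n ω) b fun n ω => D * γ n ω)
    (hV : IsPotential F ξ G V Q c f) (hξ : IsMomentNoise μ F ξ σ a)
    (hγ : ∀ n, Measurable[F n] (γ n)) (hγ0 : ∀ n ω, 0 ≤ γ n ω) (hD : 0 ≤ D)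
    (hpath : ∀ᵐ ω ∂μ, PathComparison D (γ · ω) (W · ω) (b · ω) (V · ω) (Q · ω) (c · ω) (f · ω))
    (q : ℕ) (hq : 2 * q < a) : ∀ᵐ ω ∂μ,
      HasMomentRate (γ · ω) (W · ω) (b · ω) q (σ ^ (2 * q) * ∏ j ∈ range q, (D + 2 * j)) := by
  induction q with
  | zero => exact .of_forall fun ω => by simpa using hasMomentRate_zero _ _ _
  | succ q ih =>
    specialize ih (by push_cast at hq; linarith)
    have hτ : IsClock μ F (clock γ) :=
      isClock_clock hγ hγ0 (hpath.mono fun ω h => h.tendsto_sum_rate)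
    have hgrow := hW.hasModerateGrowth_clock hξ hγ hγ0 hD q.succ_ne_zero hq.le
    have hgrowW := hgrow.of_isBigO (g' := fun n ω => D * γ n ω) hτ
      (fun n ω => pow_nonneg (hW.nonneg n ω) _)
      (.of_forall fun ω => isBigO_refl _ _) (.of_forall fun ω => isBigO_const_mul_self D _ _)
    have hgrowV := hgrow.of_isBigO (g' := f) (Y' := fun n ω => V n ω ^ (q + 1)) hτ
      (fun n ω => pow_nonneg (hW.nonneg n ω) _)
      (hpath.mono fun ω h => (h.isEquivalent.pow (q + 1)).isBigO)
      (hpath.mono fun ω h => h.gain_isBigO)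
    have hO : ∀ᵐ ω ∂μ, (fun n => ∑ k ∈ range n, γ k ω * W k ω ^ q)
        =O[atTop] fun n => ∑ k ∈ range n, γ k ω :=
      ih.mono fun ω h => isBigO_of_sub_const_mul_isLittleO h.1
    have hmeanW : ∀ᵐ ω ∂μ, (fun n => ∑ k ∈ range n, D * γ k ω * (1 + W k ω ^ q))
        =O[atTop] (clock γ · ω) := hO.mono fun ω hO =>
      (sum_const_mul_one_add_isBigO D hO).trans (sum_isBigO_clock fun n => hγ0 n ω)
    have hmeanV : ∀ᵐ ω ∂μ, (fun n => ∑ k ∈ range n, f k ω * (1 + V k ω ^ q))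
        =O[atTop] (clock γ · ω) := by
      filter_upwards [hpath, hO] with ω h hO
      exact (h.sum_gain_mul_one_add_pow_isBigO hO).trans (sum_isBigO_clock fun n => hγ0 n ω)
    filter_upwards [hpath, ih,
      hW.ae_isLittleO_pow_add_sum_sub hξ hτ q.succ_ne_zero hq hgrowW
        (hpath.mono fun ω h => by simpa using h.rate_tendsto.const_mul D) hmeanW,
      hV.ae_isLittleO_pow_add_sum_sub hξ hτ q.succ_ne_zero hq hgrowV
        (hpath.mono fun ω h => h.gain_tendsto) hmeanV] with ω h hm hexpW hexpV
    have hclock := clock_isBigO_sum h.rate_nonneg h.rate_le_one h.tendsto_sum_rate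
    convert! h.hasMomentRate_succ hm (hexpW.trans_isBigO hclock) (hexpV.trans_isBigO hclock) using 1
    rw [prod_range_succ]
    ring

end MomentRates

section InverseForm

variable {ι : Type*} [Fintype ι] [DecidableEq ι] {A L : Matrix ι ι ℝ} {v x y : ι → ℝ}

/-- The bilinear form `xᵗ A⁻¹ y` of the inverse of a matrix. -/
def invForm (A : Matrix ι ι ℝ) (x y : ι → ℝ) : ℝ :=
  x ⬝ᵥ (A⁻¹ *ᵥ y)

lemma invForm_comm (hA : A.IsHermitian) (x y : ι → ℝ) : invForm A x y = invForm A y x := by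
  have hsymm : A⁻¹ᵀ = A⁻¹ := by simpa using hA.inv.eq
  rw [invForm, invForm, dotProduct_mulVec, ← mulVec_transpose, hsymm, dotProduct_comm]

lemma invForm_self_nonneg (hA : A.PosSemidef) (x : ι → ℝ) : 0 ≤ invForm A x x := by
  simpa [invForm] using hA.inv.dotProduct_mulVec_nonneg x

lemma invForm_add_smul_self (hA : A.IsHermitian) (x v : ι → ℝ) (s : ℝ) :
    invForm A (x + s • v) (x + s • v) =
      invForm A x x + 2 * invForm A v x * s + invForm A v v * s ^ 2 := by
  have hcomm : x ⬝ᵥ (A⁻¹ *ᵥ v) = v ⬝ᵥ (A⁻¹ *ᵥ x) := invForm_comm hA x v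
  simp only [invForm, mulVec_add, mulVec_smul, dotProduct_add, add_dotProduct, smul_dotProduct,
    dotProduct_smul, smul_eq_mul, hcomm]
  ring

lemma sq_invForm_le (hA : A.PosSemidef) (x y : ι → ℝ) :
    invForm A x y ^ 2 ≤ invForm A x x * invForm A y y := by
  have hquad : ∀ s : ℝ, 0 ≤ invForm A x x * (s * s) + 2 * invForm A x y * s + invForm A y y :=
    fun s => by
      have := invForm_self_nonneg hA (y + s • x)
      rw [invForm_add_smul_self hA.isHermitian] at this
      linarith
  have := discrim_le_zero hquad
  rw [discrim] at this
  linarith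

lemma sq_apply_le_mul_invForm (hL : L.PosDef) (x : ι → ℝ) (i : ι) :
    x i ^ 2 ≤ L i i * invForm L x x := by
  have hinv : L⁻¹ * L = 1 := nonsing_inv_mul _ hL.det_pos.ne'.isUnit
  have happly : ∀ z, invForm L z (L *ᵥ Pi.single i 1) = z i := fun z => by
    rw [invForm, mulVec_mulVec, hinv, one_mulVec, dotProduct_single_one]
  have hcs := sq_invForm_le hL.posSemidef x (L *ᵥ Pi.single i 1)
  rw [happly, happly, mulVec_single_one] at hcs
  rwa [mul_comm]

section RankOneUpdate

omit [Fintype ι] [DecidableEq ι] in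
lemma posDef_add_vecMulVec_self [Finite ι] (hA : A.PosDef) (v : ι → ℝ) :
    (A + vecMulVec v v).PosDef :=
  hA.add_posSemidef (by simpa using posSemidef_vecMulVec_self_star v)

lemma invForm_eq_add_of_add_vecMulVec (hA : IsUnit A) (hB : IsUnit (A + vecMulVec v v))
    (x y : ι → ℝ) : invForm A x y =
      invForm (A + vecMulVec v v) x y + invForm (A + vecMulVec v v) v y * invForm A x v := by
  have hinv := Matrix.inv_sub_inv (iff_of_true hA hB)
  rw [add_sub_cancel_left, mul_vecMulVec, vecMulVec_mul, sub_eq_iff_eq_add'] at hinv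
  conv_lhs => rw [invForm, hinv, add_mulVec, vecMulVec_mulVec, ← dotProduct_mulVec]
  simp [invForm]

lemma det_eq_det_add_vecMulVec_mul (hB : IsUnit (A + vecMulVec v v)) :
    A.det = (A + vecMulVec v v).det * (1 - invForm (A + vecMulVec v v) v v) := by
  have hfactor : A = (A + vecMulVec v v) * (1 + vecMulVec (-((A + vecMulVec v v)⁻¹ *ᵥ v)) v) := by
    rw [mul_add, mul_one, mul_vecMulVec, mulVec_neg, mulVec_mulVec,
      mul_nonsing_inv _ ((isUnit_iff_isUnit_det _).mp hB), one_mulVec, neg_vecMulVec,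
      add_neg_cancel_right]
  conv_lhs => rw [hfactor, det_mul, vecMulVec_eq Unit (-_),
    det_one_add_replicateCol_mul_replicateRow, dotProduct_neg, ← sub_eq_add_neg]
  rfl

lemma invForm_add_vecMulVec_lt_one (hA : A.PosDef) (v : ι → ℝ) :
    invForm (A + vecMulVec v v) v v < 1 := by
  have hB := posDef_add_vecMulVec_self hA v
  have hdet := hA.det_pos
  rw [det_eq_det_add_vecMulVec_mul hB.isUnit] at hdet
  exact sub_pos.mp (pos_of_mul_pos_right hdet hB.det_pos.le)

lemma invForm_self_sub_mul_one_sub (hA : A.PosDef) (v x : ι → ℝ) :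
    (invForm A x x - invForm (A + vecMulVec v v) x x) *
      (1 - invForm (A + vecMulVec v v) v v) = invForm (A + vecMulVec v v) v x ^ 2 := by
  have hB := posDef_add_vecMulVec_self hA v
  have hxx := invForm_eq_add_of_add_vecMulVec hA.isUnit hB.isUnit x x
  have hxv := invForm_eq_add_of_add_vecMulVec hA.isUnit hB.isUnit x v
  rw [invForm_comm hB.isHermitian x v] at hxv
  linear_combination (1 - invForm (A + vecMulVec v v) v v) * hxx +
    invForm (A + vecMulVec v v) v x * hxv

lemma invForm_add_vecMulVec_self_le (hA : A.PosDef) (v x : ι → ℝ) :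
    invForm (A + vecMulVec v v) x x ≤ invForm A x x :=
  sub_nonneg.mp <| nonneg_of_mul_nonneg_left
    ((invForm_self_sub_mul_one_sub hA v x).symm ▸ sq_nonneg _)
    (sub_pos.mpr (invForm_add_vecMulVec_lt_one hA v))

end RankOneUpdate

section Limits

open Asymptotics

lemma tendsto_matrix_inv {X : ℕ → Matrix ι ι ℝ} (hL : IsUnit L.det) (hX : Tendsto X atTop (𝓝 L)) :
    Tendsto (fun n => (X n)⁻¹) atTop (𝓝 L⁻¹) := by
  have hdet : Tendsto (fun n => (X n).det) atTop (𝓝 L.det) :=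
    (continuous_id.matrix_det.tendsto L).comp hX
  have hadj : Tendsto (fun n => (X n).adjugate) atTop (𝓝 L.adjugate) :=
    (continuous_id.matrix_adjugate.tendsto L).comp hX
  simp only [Matrix.inv_def, Ring.inverse_eq_inv']
  exact (hdet.inv₀ hL.ne_zero).smul hadj

lemma isLittleO_dotProduct_mulVec {E : ℕ → Matrix ι ι ℝ} (hL : L.PosDef)
    (hE : Tendsto E atTop (𝓝 0)) (x y : ℕ → ι → ℝ) :
    (fun n => x n ⬝ᵥ (E n *ᵥ y n))
      =o[atTop] fun n => √(invForm L (x n) (x n)) * √(invForm L (y n) (y n)) := by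
  have hcoord : ∀ (z : ℕ → ι → ℝ) i, (fun n => z n i) =O[atTop] fun n => √(invForm L (z n) (z n)) :=
    fun z i => .of_bound √(L i i) <| .of_forall fun n => by
      rw [Real.norm_of_nonneg (Real.sqrt_nonneg _), ← Real.sqrt_mul hL.diag_pos.le]
      exact Real.abs_le_sqrt (sq_apply_le_mul_invForm hL _ i)
  have hentry : ∀ i j, (fun n => E n i j) =o[atTop] fun _ => (1 : ℝ) := fun i j =>
    (isLittleO_one_iff ℝ).mpr (tendsto_pi_nhds.mp (tendsto_pi_nhds.mp hE i) j)
  have hterm : ∀ i, (fun n => x n i * ∑ j, E n i j * y n j)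
      =o[atTop] fun n => √(invForm L (x n) (x n)) * √(invForm L (y n) (y n)) := fun i =>
    (hcoord x i).mul_isLittleO <| .fun_sum fun j _ => by
      simpa using (hentry i j).mul_isBigO (hcoord y j)
  exact .fun_sum fun i _ => hterm i

lemma isLittleO_invForm_sub {X : ℕ → Matrix ι ι ℝ} {s : ℕ → ℝ} (hL : L.PosDef)
    (hX : ∀ n, IsUnit (X n).det) (hs : ∀ n, 0 < s n)
    (hlim : Tendsto (fun n => (s n)⁻¹ • X n) atTop (𝓝 L)) (x y : ℕ → ι → ℝ) :
    (fun n => invForm (X n) (x n) (y n) - invForm L (x n) (y n) / s n)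
      =o[atTop] fun n => √(invForm L (x n) (x n) / s n) * √(invForm L (y n) (y n) / s n) := by
  have hinv : ∀ n, ((s n)⁻¹ • X n)⁻¹ = s n • (X n)⁻¹ := fun n => by
    have h := Matrix.inv_smul' (X n) (Units.mk0 (s n) (hs n).ne')⁻¹ (hX n)
    rwa [inv_inv] at h
  have hE : Tendsto (fun n => s n • (X n)⁻¹ - L⁻¹) atTop (𝓝 0) := by
    rw [← sub_self L⁻¹]
    simpa only [hinv] using (tendsto_matrix_inv hL.det_pos.ne'.isUnit hlim).sub_const L⁻¹
  refine ((isBigO_refl (fun n => (s n)⁻¹) atTop).mul_isLittleO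
    (isLittleO_dotProduct_mulVec hL hE x y)).congr (fun n => ?_) fun n => ?_
  · have := (hs n).ne'
    simp only [invForm, sub_mulVec, smul_mulVec, dotProduct_sub, dotProduct_smul, smul_eq_mul]
    field_simp
  · rw [Real.sqrt_div' _ (hs n).le, Real.sqrt_div' _ (hs n).le, div_mul_div_comm,
      Real.mul_self_sqrt (hs n).le, inv_mul_eq_div]

lemma isEquivalent_invForm_self {X : ℕ → Matrix ι ι ℝ} {s : ℕ → ℝ} (hL : L.PosDef)
    (hX : ∀ n, IsUnit (X n).det) (hs : ∀ n, 0 < s n)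
    (hlim : Tendsto (fun n => (s n)⁻¹ • X n) atTop (𝓝 L)) (x : ℕ → ι → ℝ) :
    (fun n => invForm (X n) (x n) (x n)) ~[atTop] fun n => invForm L (x n) (x n) / s n :=
  (isLittleO_invForm_sub hL hX hs hlim x x).congr_right fun n =>
    Real.mul_self_sqrt (div_nonneg (invForm_self_nonneg hL.posSemidef _) (hs n).le)

lemma sq_invForm_div_le (hL : L.PosSemidef) (s : ℝ) (x y : ι → ℝ) :
    (invForm L x y / s) ^ 2 ≤ invForm L x x / s * (invForm L y y / s) := by
  rw [div_pow, div_mul_div_comm, ← sq]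
  exact div_le_div_of_nonneg_right (sq_invForm_le hL x y) (sq_nonneg s)

lemma isLittleO_sq_invForm_sub_sq {X : ℕ → Matrix ι ι ℝ} {s : ℕ → ℝ} (hL : L.PosDef)
    (hX : ∀ n, IsUnit (X n).det) (hs : ∀ n, 0 < s n)
    (hlim : Tendsto (fun n => (s n)⁻¹ • X n) atTop (𝓝 L)) (x y : ℕ → ι → ℝ) :
    (fun n => invForm (X n) (x n) (y n) ^ 2 - (invForm L (x n) (y n) / s n) ^ 2)
      =o[atTop] fun n => invForm L (x n) (x n) / s n * (invForm L (y n) (y n) / s n) := by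
  have h0 : ∀ (z : ℕ → ι → ℝ) n, 0 ≤ invForm L (z n) (z n) / s n := fun z n =>
    div_nonneg (invForm_self_nonneg hL.posSemidef _) (hs n).le
  have hsub := isLittleO_invForm_sub hL hX hs hlim x y
  have hO : (fun n => invForm L (x n) (y n) / s n)
      =O[atTop] fun n => √(invForm L (x n) (x n) / s n) * √(invForm L (y n) (y n) / s n) :=
    .of_norm_le fun n => by
      rw [← Real.sqrt_mul (h0 x n)]
      exact Real.abs_le_sqrt (sq_invForm_div_le hL.posSemidef _ _ _)
  refine (hsub.mul_isBigO (hsub.isBigO.add (hO.const_mul_left 2))).congr (fun n => by ring)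
    fun n => ?_
  rw [mul_mul_mul_comm, Real.mul_self_sqrt (h0 x n), Real.mul_self_sqrt (h0 y n)]

end Limits

section Measurability

variable {Ω : Type*} {m : MeasurableSpace Ω}

lemma measurable_matrix_det {X : Ω → Matrix ι ι ℝ} (hX : ∀ i j, Measurable fun ω => X ω i j) :
    Measurable fun ω => (X ω).det := by
  simp only [det_apply]
  exact Finset.measurable_fun_sum _ fun σ _ =>
    (Finset.measurable_fun_prod _ fun i _ => hX _ _).const_smul _

lemma measurable_matrix_inv_apply {X : Ω → Matrix ι ι ℝ} (hX : ∀ i j, Measurable fun ω => X ω i j)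
    (i j : ι) : Measurable fun ω => (X ω)⁻¹ i j := by
  simp only [Matrix.inv_def, Ring.inverse_eq_inv', Matrix.smul_apply, smul_eq_mul, adjugate_apply]
  refine (measurable_matrix_det hX).inv.mul (measurable_matrix_det fun k l => ?_)
  by_cases h : k = j
  · simp [h]
  · simpa only [updateRow_ne h] using hX k l

lemma measurable_invForm {X : Ω → Matrix ι ι ℝ} {x y : Ω → ι → ℝ}
    (hX : ∀ i j, Measurable fun ω => X ω i j) (hx : Measurable x) (hy : Measurable y) :
    Measurable fun ω => invForm (X ω) (x ω) (y ω) :=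
  Finset.measurable_fun_sum _ fun i _ => (measurable_pi_iff.mp hx i).mul <|
    Finset.measurable_fun_sum _ fun j _ =>
      (measurable_matrix_inv_apply hX i j).mul (measurable_pi_iff.mp hy j)

end Measurability

end InverseForm

section Normalization

open Asymptotics

lemma isLittleO_neg_log_one_sub_sub {u : ℕ → ℝ} (hu : Tendsto u atTop (𝓝 0)) :
    (fun n => -Real.log (1 - u n) - u n) =o[atTop] u := by
  have hderiv : HasDerivAt (fun x => -Real.log (1 - x)) 1 0 := by
    simpa using (((hasDerivAt_id (0 : ℝ)).const_sub 1).log (by simp)).fun_neg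
  simpa [Function.comp_def] using (hasDerivAt_iff_isLittleO_nhds_zero.mp hderiv).comp_tendsto hu

lemma tendsto_sum_of_one_sub_eq_div {s u : ℕ → ℝ} (hs : ∀ n, 0 < s n)
    (hlim : Tendsto s atTop atTop) (hu0 : ∀ n, 0 ≤ u n) (hu : Tendsto u atTop (𝓝 0))
    (hsu : ∀ n, 1 - u n = s n / s (n + 1)) :
    Tendsto (fun n => ∑ k ∈ range n, u k) atTop atTop := by
  rw [← not_summable_iff_tendsto_nat_atTop_of_nonneg hu0]
  intro hsum
  have hlog : Summable fun n => -Real.log (1 - u n) := summable_of_isBigO_nat hsum <|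
    ((isLittleO_neg_log_one_sub_sub hu).isBigO.add (isBigO_refl u atTop)).congr_left
      fun n => sub_add_cancel _ _
  have htelescope : ∀ n, ∑ k ∈ range n, -Real.log (1 - u k) = Real.log (s n) - Real.log (s 0) :=
    fun n => by
      rw [← sum_range_sub (fun k => Real.log (s k))]
      refine sum_congr rfl fun k _ => ?_
      rw [hsu, Real.log_div (hs k).ne' (hs _).ne', neg_sub]
  refine not_tendsto_nhds_of_tendsto_atTop (tendsto_atTop_add_const_right atTop (-Real.log (s 0))
    (Real.tendsto_log_atTop.comp hlim)) _ (hlog.hasSum.tendsto_sum_nat.congr htelescope)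

namespace PathComparison

variable {D : ℝ} {γ W b V Q c f : ℕ → ℝ}

lemma isLittleO_sum_neg_log_one_sub_gain (h : PathComparison D γ W b V Q c f) :
    (fun n => ∑ k ∈ range n, -Real.log (1 - f k) - D * ∑ k ∈ range n, γ k)
      =o[atTop] fun n => ∑ k ∈ range n, γ k := by
  have hterm : (fun n => -Real.log (1 - f n) - D * γ n) =o[atTop] fun n => γ n * W n ^ 0 := by
    simpa using ((isLittleO_neg_log_one_sub_sub h.gain_tendsto).trans_isBigO h.gain_isBigO).add
      h.gain_isLittleO
  refine (h.isLittleO_sum hterm (by simpa using isBigO_refl _ _)).congr_left fun n => ?_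
  rw [sum_sub_distrib, mul_sum]

theorem tendsto_inv_mul_sum_gain_mul_pow (h : PathComparison D γ W b V Q c f) (hD : D ≠ 0) {q : ℕ}
    {m : ℝ} (hm : HasMomentRate γ W b q m) {y : ℕ → ℝ}
    (hy : (fun n => y n - D * ∑ k ∈ range n, γ k) =o[atTop] fun n => ∑ k ∈ range n, γ k) :
    Tendsto (fun n => (y (n + 1))⁻¹ * ∑ k ∈ Icc 1 n, f k * V k ^ q) atTop (𝓝 m) := by
  set t : ℕ → ℝ := fun n => ∑ k ∈ range n, γ k
  have hlim : ∀ {x : ℕ → ℝ} {l : ℝ}, (fun n => x n - l * t n) =o[atTop] t →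
      Tendsto (fun n => x n / t n) atTop (𝓝 l) := fun {x l} hx => by
    rw [← zero_add l]
    refine (hx.tendsto_div_nhds_zero.add_const l).congr' ?_
    filter_upwards [h.tendsto_sum_rate.eventually_gt_atTop 0] with n hn
    rw [sub_div, mul_div_assoc, div_self hn.ne', mul_one, sub_add_cancel]
  have hsum : Tendsto (fun n => (∑ k ∈ range n, f k * V k ^ q - f 0 * V 0 ^ q) / t n) atTop
      (𝓝 (D * m)) := hlim <| by
    refine (((h.isLittleO_sum_gain_mul_pow_sub (isBigO_of_sub_const_mul_isLittleO hm.1)).add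
      (hm.1.const_mul_left D)).sub
      (isLittleO_const_of_tendsto_atTop h.tendsto_sum_rate (f 0 * V 0 ^ q))).congr_left fun n => ?_
    ring
  have hquot := (((hlim hy).inv₀ hD).mul hsum).comp (tendsto_add_atTop_nat 1)
  rw [inv_mul_cancel_left₀ hD] at hquot
  refine hquot.congr' ?_
  filter_upwards [(tendsto_add_atTop_nat 1).eventually (h.tendsto_sum_rate.eventually_gt_atTop 0)]
    with n hn
  rw [Function.comp_apply, range_eq_Ico, sum_eq_sum_Ico_succ_bot n.succ_pos, add_sub_cancel_left,
    inv_div, div_mul_div_cancel₀' hn.ne', inv_mul_eq_div]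
  rfl

end PathComparison

end Normalization

section DesignMatrix

open Asymptotics

variable {ι : Type*} [Fintype ι] [DecidableEq ι] {S L : Matrix ι ι ℝ} {φ : ℕ → ι → ℝ}

/-- The regularized design matrix `S + ∑_{k<n} φ_k φ_kᵗ`; it is `S_{n-1}` in the paper's
indexing. -/
def designMatrix (S : Matrix ι ι ℝ) (φ : ℕ → ι → ℝ) (n : ℕ) : Matrix ι ι ℝ :=
  S + ∑ k ∈ range n, vecMulVec (φ k) (φ k)

/-- The scalar normalization of the design matrices read off their `L⁻¹`-trace. -/
def scale (L : Matrix ι ι ℝ) (φ : ℕ → ι → ℝ) (n : ℕ) : ℝ :=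
  1 + ∑ k ∈ range n, invForm L (φ k) (φ k) / Fintype.card ι

/-- The relative increment of `scale` at step `n`. -/
def rate (L : Matrix ι ι ℝ) (φ : ℕ → ι → ℝ) (n : ℕ) : ℝ :=
  invForm L (φ n) (φ n) / Fintype.card ι / scale L φ (n + 1)

omit [Fintype ι] [DecidableEq ι] in
lemma designMatrix_succ (S : Matrix ι ι ℝ) (φ : ℕ → ι → ℝ) (n : ℕ) :
    designMatrix S φ (n + 1) = designMatrix S φ n + vecMulVec (φ n) (φ n) := by
  rw [designMatrix, designMatrix, sum_range_succ, add_assoc]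

omit [Fintype ι] [DecidableEq ι] in
lemma posDef_designMatrix [Finite ι] (hS : S.PosDef) (φ : ℕ → ι → ℝ) (n : ℕ) :
    (designMatrix S φ n).PosDef := by
  induction n with
  | zero => simpa [designMatrix] using hS
  | succ n ih =>
    rw [designMatrix_succ]
    exact posDef_add_vecMulVec_self ih _

lemma isUnit_det_designMatrix (hS : S.PosDef) (φ : ℕ → ι → ℝ) (n : ℕ) :
    IsUnit (designMatrix S φ n).det :=
  (posDef_designMatrix hS φ n).det_pos.ne'.isUnit

lemma invForm_designMatrix_succ_lt_one (hS : S.PosDef) (φ : ℕ → ι → ℝ) (n : ℕ) :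
    invForm (designMatrix S φ (n + 1)) (φ n) (φ n) < 1 := by
  rw [designMatrix_succ]
  exact invForm_add_vecMulVec_lt_one (posDef_designMatrix hS φ n) _

lemma log_det_designMatrix (hS : S.PosDef) (φ : ℕ → ι → ℝ) (n : ℕ) :
    Real.log (designMatrix S φ n).det = Real.log S.det +
      ∑ k ∈ range n, -Real.log (1 - invForm (designMatrix S φ (k + 1)) (φ k) (φ k)) := by
  induction n with
  | zero => simp [designMatrix]
  | succ n ih =>
    have hB := posDef_designMatrix hS φ (n + 1)
    have hlt := invForm_designMatrix_succ_lt_one hS φ n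
    rw [sum_range_succ, ← add_assoc, ← ih]
    rw [designMatrix_succ] at hB hlt ⊢
    rw [det_eq_det_add_vecMulVec_mul hB.isUnit, Real.log_mul hB.det_pos.ne' (sub_pos.mpr hlt).ne',
      add_neg_cancel_right]

lemma scale_succ (L : Matrix ι ι ℝ) (φ : ℕ → ι → ℝ) (n : ℕ) :
    scale L φ (n + 1) = scale L φ n + invForm L (φ n) (φ n) / Fintype.card ι := by
  rw [scale, scale, sum_range_succ, add_assoc]

lemma scale_pos (hL : L.PosSemidef) (φ : ℕ → ι → ℝ) (n : ℕ) : 0 < scale L φ n :=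
  add_pos_of_pos_of_nonneg one_pos <| sum_nonneg fun _ _ =>
    div_nonneg (invForm_self_nonneg hL _) (Nat.cast_nonneg _)

lemma rate_nonneg (hL : L.PosSemidef) (φ : ℕ → ι → ℝ) (n : ℕ) : 0 ≤ rate L φ n :=
  div_nonneg (div_nonneg (invForm_self_nonneg hL _) (Nat.cast_nonneg _)) (scale_pos hL φ _).le

lemma one_sub_rate (hL : L.PosSemidef) (φ : ℕ → ι → ℝ) (n : ℕ) :
    1 - rate L φ n = scale L φ n / scale L φ (n + 1) := by
  rw [eq_div_iff (scale_pos hL φ _).ne', rate, sub_mul, div_mul_cancel₀ _ (scale_pos hL φ _).ne',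
    scale_succ, one_mul, add_sub_cancel_right]

lemma rate_le_one (hL : L.PosSemidef) (φ : ℕ → ι → ℝ) (n : ℕ) : rate L φ n ≤ 1 := by
  rw [← sub_nonneg, one_sub_rate hL]
  exact (div_pos (scale_pos hL φ _) (scale_pos hL φ _)).le

lemma one_sub_rate_mul_div_scale (hL : L.PosSemidef) (φ : ℕ → ι → ℝ) (n : ℕ) (x : ℝ) :
    (1 - rate L φ n) * (x / scale L φ n) = x / scale L φ (n + 1) := by
  rw [one_sub_rate hL, mul_comm, div_mul_div_cancel₀ (scale_pos hL φ n).ne']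

variable [Nonempty ι]

lemma card_mul_rate (L : Matrix ι ι ℝ) (φ : ℕ → ι → ℝ) (n : ℕ) :
    Fintype.card ι * rate L φ n = invForm L (φ n) (φ n) / scale L φ (n + 1) := by
  rw [rate, ← mul_div_assoc, mul_div_cancel₀ _ (Nat.cast_ne_zero.mpr Fintype.card_ne_zero)]

lemma trace_inv_mul_designMatrix (S L : Matrix ι ι ℝ) (φ : ℕ → ι → ℝ) (n : ℕ) :
    (L⁻¹ * designMatrix S φ n).trace = (L⁻¹ * S).trace + Fintype.card ι * (scale L φ n - 1) := by
  have hcard : (Fintype.card ι : ℝ) ≠ 0 := Nat.cast_ne_zero.mpr Fintype.card_ne_zero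
  rw [designMatrix, scale, mul_add, trace_add, mul_sum, trace_sum, add_sub_cancel_left, mul_sum]
  congr 1
  refine sum_congr rfl fun k _ => ?_
  rw [mul_div_cancel₀ _ hcard, mul_vecMulVec, trace_vecMulVec, dotProduct_comm, invForm]

lemma tendsto_scale_div (hL : L.PosDef) {α : ℕ → ℝ} (hα : Tendsto α atTop atTop)
    (hlim : Tendsto (fun n => (α n)⁻¹ • designMatrix S φ (n + 1)) atTop (𝓝 L)) :
    Tendsto (fun n => scale L φ (n + 1) / α n) atTop (𝓝 1) := by
  have hcard : (Fintype.card ι : ℝ) ≠ 0 := Nat.cast_ne_zero.mpr Fintype.card_ne_zero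
  have htrace : Tendsto (fun n => (α n)⁻¹ * (L⁻¹ * designMatrix S φ (n + 1)).trace) atTop
      (𝓝 (Fintype.card ι)) := by
    have hcont : Continuous fun X : Matrix ι ι ℝ => (L⁻¹ * X).trace := by fun_prop
    simpa [Function.comp_def, nonsing_inv_mul _ hL.det_pos.ne'.isUnit]
      using (hcont.tendsto L).comp hlim
  have hconst := hα.inv_tendsto_atTop.mul_const (1 - (L⁻¹ * S).trace / Fintype.card ι)
  convert! (htrace.div_const (Fintype.card ι : ℝ)).add hconst using 2 with n
  · rw [trace_inv_mul_designMatrix, Pi.inv_apply]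
    field_simp
    ring
  · rw [div_self hcard, zero_mul, add_zero]

lemma tendsto_scale (hL : L.PosDef) {α : ℕ → ℝ} (hα : Tendsto α atTop atTop)
    (hlim : Tendsto (fun n => (α n)⁻¹ • designMatrix S φ (n + 1)) atTop (𝓝 L)) :
    Tendsto (scale L φ) atTop atTop := by
  rw [← tendsto_add_atTop_iff_nat 1]
  refine ((tendsto_scale_div hL hα hlim).pos_mul_atTop one_pos hα).congr' ?_
  filter_upwards [hα.eventually_ne_atTop 0] with n hn using div_mul_cancel₀ _ hn

lemma tendsto_inv_scale_smul_designMatrix (hL : L.PosDef) {α : ℕ → ℝ} (hα : Tendsto α atTop atTop)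
    (hlim : Tendsto (fun n => (α n)⁻¹ • designMatrix S φ (n + 1)) atTop (𝓝 L)) :
    Tendsto (fun n => (scale L φ n)⁻¹ • designMatrix S φ n) atTop (𝓝 L) := by
  rw [← tendsto_add_atTop_iff_nat 1]
  have h := ((tendsto_scale_div hL hα hlim).inv₀ one_ne_zero).smul hlim
  rw [inv_one, one_smul] at h
  refine h.congr' ?_
  filter_upwards [hα.eventually_ne_atTop 0] with n hn
  rw [smul_smul, inv_div, div_mul_eq_mul_div, mul_inv_cancel₀ hn, one_div]

end DesignMatrix

section DesignComparison

open Asymptotics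

variable {ι : Type*} [Fintype ι] [DecidableEq ι] {S L : Matrix ι ι ℝ}
  {φ : ℕ → ι → ℝ} {α : ℕ → ℝ}

lemma isLittleO_invForm_sub_sub_sq {m : ℕ → ι → ℝ} {b x : ℕ → ℝ} (hS : S.PosDef)
    (hf : Tendsto (fun n => invForm (designMatrix S φ (n + 1)) (φ n) (φ n)) atTop (𝓝 0))
    (hb : (fun n => b n ^ 2) =O[atTop] x)
    (hc : (fun n => invForm (designMatrix S φ (n + 1)) (φ n) (m n) ^ 2 - b n ^ 2) =o[atTop] x) :
    (fun n => invForm (designMatrix S φ n) (m n) (m n) -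
      invForm (designMatrix S φ (n + 1)) (m n) (m n) - b n ^ 2) =o[atTop] x := by
  set f : ℕ → ℝ := fun n => invForm (designMatrix S φ (n + 1)) (φ n) (φ n) with hf_def
  set c : ℕ → ℝ := fun n => invForm (designMatrix S φ (n + 1)) (φ n) (m n) with hc_def
  set v : ℕ → ℝ := fun n => invForm (designMatrix S φ n) (m n) (m n) -
    invForm (designMatrix S φ (n + 1)) (m n) (m n) with hv_def
  have hlt : ∀ n, f n < 1 := invForm_designMatrix_succ_lt_one hS φ
  have hloss : ∀ n, v n * (1 - f n) = c n ^ 2 := fun n => by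
    simp only [hv_def, hf_def, hc_def, designMatrix_succ]
    exact invForm_self_sub_mul_one_sub (posDef_designMatrix hS φ n) _ _
  have hinv : (fun n => (1 - f n)⁻¹) =O[atTop] fun _ => (1 : ℝ) :=
    ((hf.const_sub 1).inv₀ (by norm_num)).isBigO_one ℝ
  have hcO : (fun n => c n ^ 2) =O[atTop] x :=
    (hc.isBigO.add hb).congr_left fun n => sub_add_cancel _ _
  have hvO : v =O[atTop] x := (hcO.mul hinv).congr
    (fun n => by rw [← hloss, mul_inv_cancel_right₀ (sub_pos.mpr (hlt n)).ne'])
    fun n => mul_one _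
  have hfv : (fun n => f n * v n) =o[atTop] x :=
    (((isLittleO_one_iff ℝ).mpr hf).mul_isBigO hvO).congr_right fun n => one_mul _
  exact (hc.add hfv).congr_left fun n => by linarith [hloss n]

variable [Nonempty ι]

lemma sq_invForm_div_scale_le (hL : L.PosSemidef) (φ : ℕ → ι → ℝ) (n : ℕ) (x : ι → ℝ) :
    (invForm L (φ n) x / scale L φ (n + 1)) ^ 2 ≤
      Fintype.card ι * rate L φ n * ((1 - rate L φ n) * (invForm L x x / scale L φ n)) := by
  rw [card_mul_rate, one_sub_rate_mul_div_scale hL]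
  exact sq_invForm_div_le hL _ _ _

lemma isEquivalent_gain_designMatrix (hS : S.PosDef) (hL : L.PosDef) (hα : Tendsto α atTop atTop)
    (hlim : Tendsto (fun n => (α n)⁻¹ • designMatrix S φ (n + 1)) atTop (𝓝 L)) :
    (fun n => invForm (designMatrix S φ (n + 1)) (φ n) (φ n))
      ~[atTop] fun n => Fintype.card ι * rate L φ n := by
  simp only [card_mul_rate]
  exact isEquivalent_invForm_self hL (fun n => isUnit_det_designMatrix hS φ (n + 1))
    (fun n => scale_pos hL.posSemidef φ (n + 1))
    ((tendsto_inv_scale_smul_designMatrix hL hα hlim).comp (tendsto_add_atTop_nat 1)) φ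

lemma tendsto_rate (hS : S.PosDef) (hL : L.PosDef) (hα : Tendsto α atTop atTop)
    (hlim : Tendsto (fun n => (α n)⁻¹ • designMatrix S φ (n + 1)) atTop (𝓝 L))
    (hf : Tendsto (fun n => invForm (designMatrix S φ (n + 1)) (φ n) (φ n)) atTop (𝓝 0)) :
    Tendsto (rate L φ) atTop (𝓝 0) := by
  have hcard : (Fintype.card ι : ℝ) ≠ 0 := Nat.cast_ne_zero.mpr Fintype.card_ne_zero
  simpa only [inv_mul_cancel_left₀ hcard, mul_zero] using
    ((isEquivalent_gain_designMatrix hS hL hα hlim).tendsto_nhds hf).const_mul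
      (Fintype.card ι : ℝ)⁻¹

theorem pathComparison_designMatrix (hS : S.PosDef) (hL : L.PosDef) (hα : Tendsto α atTop atTop)
    (hlim : Tendsto (fun n => (α n)⁻¹ • designMatrix S φ (n + 1)) atTop (𝓝 L))
    (hf : Tendsto (fun n => invForm (designMatrix S φ (n + 1)) (φ n) (φ n)) atTop (𝓝 0))
    (m : ℕ → ι → ℝ) :
    PathComparison (Fintype.card ι) (rate L φ) (fun n => invForm L (m n) (m n) / scale L φ n)
      (fun n => invForm L (φ n) (m n) / scale L φ (n + 1))
      (fun n => invForm (designMatrix S φ n) (m n) (m n))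
      (fun n => invForm (designMatrix S φ (n + 1)) (m n) (m n))
      (fun n => invForm (designMatrix S φ (n + 1)) (φ n) (m n))
      (fun n => invForm (designMatrix S φ (n + 1)) (φ n) (φ n)) := by
  have hL' := hL.posSemidef
  have hγ := tendsto_rate hS hL hα hlim hf
  have hscale := tendsto_inv_scale_smul_designMatrix hL hα hlim
  have hscale' := hscale.comp (tendsto_add_atTop_nat 1)
  have hcontr := isEquivalent_one_sub_mul hγ fun n => invForm L (m n) (m n) / scale L φ n
  have hD := isBigO_const_mul_self (Fintype.card ι : ℝ) (rate L φ) atTop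
  have hsq : (fun n => (invForm L (φ n) (m n) / scale L φ (n + 1)) ^ 2)
      =O[atTop] fun n => rate L φ n * (invForm L (m n) (m n) / scale L φ n) :=
    .trans (.of_norm_le fun n => by
      rw [Real.norm_of_nonneg (sq_nonneg _)]
      exact sq_invForm_div_scale_le hL' φ n (m n)) (hD.mul hcontr.isBigO)
  have hsq' := (isLittleO_sq_invForm_sub_sq hL (fun n => isUnit_det_designMatrix hS φ (n + 1))
    (fun n => scale_pos hL' φ (n + 1)) hscale' φ m).trans_isBigO ((hD.mul hcontr.isBigO).congr_left
      fun n => by rw [card_mul_rate, one_sub_rate_mul_div_scale hL'])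
  exact
  { rate_nonneg := rate_nonneg hL' φ
    rate_le_one := rate_le_one hL' φ
    rate_tendsto := hγ
    tendsto_sum_rate := tendsto_sum_of_one_sub_eq_div (scale_pos hL' φ) (tendsto_scale hL hα hlim)
      (rate_nonneg hL' φ) hγ (one_sub_rate hL' φ)
    nonneg := fun n => div_nonneg (invForm_self_nonneg hL' _) (scale_pos hL' φ n).le
    sq_cross_isBigO := hsq
    isEquivalent := isEquivalent_invForm_self hL (isUnit_det_designMatrix hS φ) (scale_pos hL' φ)
      hscale m
    base_isEquivalent := by
      refine .trans ?_ hcontr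
      simp only [one_sub_rate_mul_div_scale hL']
      exact isEquivalent_invForm_self hL (fun n => isUnit_det_designMatrix hS φ (n + 1))
        (fun n => scale_pos hL' φ (n + 1)) hscale' m
    gain_isLittleO := (isEquivalent_gain_designMatrix hS hL hα hlim).isLittleO.trans_isBigO hD
    sq_cross_isLittleO := hsq'
    loss_isLittleO := isLittleO_invForm_sub_sub_sq hS hf hsq hsq' }

end DesignComparison

section DesignPotentials

variable {ι : Type*} [Fintype ι] [DecidableEq ι] {S L : Matrix ι ι ℝ}
  {Ω : Type*} {m0 : MeasurableSpace Ω} {F : Filtration ℕ m0} {Φ M : ℕ → Ω → ι → ℝ} {ξ : ℕ → Ω → ℝ}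

omit [Fintype ι] [DecidableEq ι] in
lemma measurable_designMatrix_apply {m : MeasurableSpace Ω} (S : Matrix ι ι ℝ) {n : ℕ}
    (hΦ : ∀ k < n, Measurable (Φ k)) (i j : ι) :
    Measurable fun ω => designMatrix S (Φ · ω) n i j := by
  simp only [designMatrix, Matrix.add_apply, Matrix.sum_apply, vecMulVec_apply]
  exact measurable_const.add <| Finset.measurable_fun_sum _ fun k hk =>
    have h := measurable_pi_iff.mp (hΦ k (mem_range.mp hk))
    (h i).mul (h j)

lemma measurable_scale {m : MeasurableSpace Ω} (L : Matrix ι ι ℝ) {n : ℕ}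
    (hΦ : ∀ k < n, Measurable (Φ k)) : Measurable fun ω => scale L (Φ · ω) n := by
  have hform : ∀ k ∈ range n, Measurable fun ω => invForm L (Φ k ω) (Φ k ω) := fun k hk =>
    have h := hΦ k (mem_range.mp hk)
    measurable_invForm (fun _ _ => measurable_const) h h
  exact measurable_const.add (Finset.measurable_fun_sum _ fun k hk => (hform k hk).div_const _)

lemma measurable_rate {m : MeasurableSpace Ω} (L : Matrix ι ι ℝ) {n : ℕ}
    (hΦ : ∀ k < n + 1, Measurable (Φ k)) : Measurable fun ω => rate L (Φ · ω) n := by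
  have h := hΦ n n.lt_succ_self
  have hform : Measurable fun ω => invForm L (Φ n ω) (Φ n ω) :=
    measurable_invForm (fun _ _ => measurable_const) h h
  exact (hform.div_const _).div (measurable_scale L hΦ)

lemma isPotential_designMatrix (hS : S.PosDef) (hΦ : ∀ n, Measurable[F n] (Φ n))
    (hM : ∀ n, Measurable[F n] (M n)) (hsucc : ∀ n ω, M (n + 1) ω = M n ω + ξ n ω • Φ n ω) :
    IsPotential F ξ 1 (fun n ω => invForm (designMatrix S (Φ · ω) n) (M n ω) (M n ω))
      (fun n ω => invForm (designMatrix S (Φ · ω) (n + 1)) (M n ω) (M n ω))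
      (fun n ω => invForm (designMatrix S (Φ · ω) (n + 1)) (Φ n ω) (M n ω))
      (fun n ω => invForm (designMatrix S (Φ · ω) (n + 1)) (Φ n ω) (Φ n ω)) := by
  have hD : ∀ n, ∀ k ≤ n + 1, ∀ i j, Measurable[F n] fun ω => designMatrix S (Φ · ω) k i j :=
    fun n k hk => measurable_designMatrix_apply (m := F n) S fun l hl =>
      (hΦ l).mono (F.mono (by omega)) le_rfl
  have hform : ∀ n, ∀ k ≤ n + 1, ∀ {x y : Ω → ι → ℝ}, Measurable[F n] x → Measurable[F n] y →
      Measurable[F n] fun ω => invForm (designMatrix S (Φ · ω) k) (x ω) (y ω) := fun n k hk _ _ =>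
    measurable_invForm (m := F n) (hD n k hk)
  have hpos : ∀ n ω, (designMatrix S (Φ · ω) n).PosDef := fun n ω => posDef_designMatrix hS _ n
  exact
  { measurable := fun n => hform n n n.le_succ (hM n) (hM n)
    measurable_base := fun n => hform n _ le_rfl (hM n) (hM n)
    measurable_cross := fun n => hform n _ le_rfl (hΦ n) (hM n)
    measurable_gain := fun n => hform n _ le_rfl (hΦ n) (hΦ n)
    succ_eq := fun n ω => by
      rw [hsucc, invForm_add_smul_self (hpos _ ω).isHermitian]
    base_nonneg := fun n ω => invForm_self_nonneg (hpos _ ω).posSemidef _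
    base_le := fun n ω => by
      rw [designMatrix_succ]
      exact invForm_add_vecMulVec_self_le (hpos n ω) _ _
    sq_cross_le := fun n ω => sq_invForm_le (hpos _ ω).posSemidef _ _
    gain_nonneg := fun n ω => invForm_self_nonneg (hpos _ ω).posSemidef _
    gain_le := fun n ω => (invForm_designMatrix_succ_lt_one hS _ n).le }

lemma isPotential_scale [Nonempty ι] (hL : L.PosSemidef) (hΦ : ∀ n, Measurable[F n] (Φ n))
    (hM : ∀ n, Measurable[F n] (M n)) (hsucc : ∀ n ω, M (n + 1) ω = M n ω + ξ n ω • Φ n ω) :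
    IsPotential F ξ (Fintype.card ι) (fun n ω => invForm L (M n ω) (M n ω) / scale L (Φ · ω) n)
      (fun n ω => (1 - rate L (Φ · ω) n) * (invForm L (M n ω) (M n ω) / scale L (Φ · ω) n))
      (fun n ω => invForm L (Φ n ω) (M n ω) / scale L (Φ · ω) (n + 1))
      (fun n ω => Fintype.card ι * rate L (Φ · ω) n) := by
  have hΦ' : ∀ n, ∀ k < n + 1, Measurable[F n] (Φ k) := fun n k hk =>
    (hΦ k).mono (F.mono (Nat.lt_succ_iff.mp hk)) le_rfl
  have hrate : ∀ n, Measurable[F n] fun ω => rate L (Φ · ω) n := fun n =>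
    measurable_rate (m := F n) L (hΦ' n)
  have hform : ∀ n {x y : Ω → ι → ℝ}, Measurable[F n] x → Measurable[F n] y →
      Measurable[F n] fun ω => invForm L (x ω) (y ω) := fun n _ _ =>
    measurable_invForm (m := F n) fun _ _ => measurable_const
  have hW : ∀ n, Measurable[F n] fun ω => invForm L (M n ω) (M n ω) / scale L (Φ · ω) n := fun n =>
    (hform n (hM n) (hM n)).div
      (measurable_scale (m := F n) L fun k hk => hΦ' n k (hk.trans n.lt_succ_self))
  have hW0 : ∀ n ω, 0 ≤ invForm L (M n ω) (M n ω) / scale L (Φ · ω) n := fun n ω =>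
    div_nonneg (invForm_self_nonneg hL _) (scale_pos hL _ n).le
  exact
  { measurable := hW
    measurable_base := fun n => ((hrate n).const_sub 1).mul (hW n)
    measurable_cross := fun n =>
      (hform n (hΦ n) (hM n)).div (measurable_scale (m := F n) L (hΦ' n))
    measurable_gain := fun n => (hrate n).const_mul _
    succ_eq := fun n ω => by
      rw [card_mul_rate, one_sub_rate_mul_div_scale hL, hsucc, invForm_add_smul_self hL.isHermitian]
      ring
    base_nonneg := fun n ω => mul_nonneg (sub_nonneg.mpr (rate_le_one hL _ n)) (hW0 n ω)
    base_le := fun n ω => mul_le_of_le_one_left (hW0 n ω) (sub_le_self _ (rate_nonneg hL _ n))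
    sq_cross_le := fun n ω => sq_invForm_div_scale_le hL (Φ · ω) n (M n ω)
    gain_nonneg := fun n ω => mul_nonneg (Nat.cast_nonneg _) (rate_nonneg hL _ n)
    gain_le := fun n ω => mul_le_of_le_one_right (Nat.cast_nonneg _) (rate_le_one hL _ n) }

end DesignPotentials

section MomentLimit

open Asymptotics

variable {ι : Type*} [Fintype ι] [DecidableEq ι] {S L : Matrix ι ι ℝ}
  {Ω : Type*} {m0 : MeasurableSpace Ω} {μ : Measure Ω} {F : Filtration ℕ m0}

lemma isLittleO_log_det_designMatrix_sub {φ : ℕ → ι → ℝ} {D : ℝ} {γ W b V Q c : ℕ → ℝ}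
    (hS : S.PosDef) (h : PathComparison D γ W b V Q c
      fun n => invForm (designMatrix S φ (n + 1)) (φ n) (φ n)) :
    (fun n => Real.log (designMatrix S φ n).det - D * ∑ k ∈ range n, γ k)
      =o[atTop] fun n => ∑ k ∈ range n, γ k := by
  refine ((isLittleO_const_of_tendsto_atTop h.tendsto_sum_rate (Real.log S.det)).add
    h.isLittleO_sum_neg_log_one_sub_gain).congr_left fun n => ?_
  rw [log_det_designMatrix hS, add_sub_assoc]

theorem asclt_moments_vector_general [Nonempty ι] [IsProbabilityMeasure μ] {σ a : ℝ}
    {ξ : ℕ → Ω → ℝ} {Φ M : ℕ → Ω → ι → ℝ} {α : ℕ → Ω → ℝ} (hξ : IsMomentNoise μ F ξ σ a)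
    (hS : S.PosDef) (hL : L.PosDef) (hΦ : ∀ n, Measurable[F n] (Φ n))
    (hM : ∀ n, Measurable[F n] (M n)) (hsucc : ∀ n ω, M (n + 1) ω = M n ω + ξ n ω • Φ n ω)
    (hf : ∀ᵐ ω ∂μ, Tendsto (fun n =>
      invForm (designMatrix S (Φ · ω) (n + 1)) (Φ n ω) (Φ n ω)) atTop (𝓝 0))
    (hα : ∀ᵐ ω ∂μ, Tendsto (α · ω) atTop atTop)
    (hlim : ∀ᵐ ω ∂μ, Tendsto (fun n => (α n ω)⁻¹ • designMatrix S (Φ · ω) (n + 1)) atTop (𝓝 L))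
    (p : ℕ) (hp : 2 * p < a) :
    ∀ᵐ ω ∂μ, Tendsto (fun n => (Real.log (designMatrix S (Φ · ω) (n + 1)).det)⁻¹ *
      ∑ k ∈ Icc 1 n, invForm (designMatrix S (Φ · ω) (k + 1)) (Φ k ω) (Φ k ω) *
        invForm (designMatrix S (Φ · ω) k) (M k ω) (M k ω) ^ p)
      atTop (𝓝 (σ ^ (2 * p) * ∏ j ∈ range p, (Fintype.card ι + 2 * (j : ℝ)))) := by
  have hcard : (Fintype.card ι : ℝ) ≠ 0 := Nat.cast_ne_zero.mpr Fintype.card_ne_zero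
  have hγ : ∀ n, Measurable[F n] fun ω => rate L (Φ · ω) n := fun n =>
    measurable_rate (m := F n) L fun k hk => (hΦ k).mono (F.mono (Nat.lt_succ_iff.mp hk)) le_rfl
  have hpath := (hf.and (hα.and hlim)).mono fun ω ⟨hf, hα, hlim⟩ =>
    pathComparison_designMatrix hS hL hα hlim hf (M · ω)
  have hrate := ae_hasMomentRate (isPotential_scale hL.posSemidef hΦ hM hsucc)
    (isPotential_designMatrix hS hΦ hM hsucc) hξ hγ (fun n ω => rate_nonneg hL.posSemidef _ n)
    (Nat.cast_nonneg _) hpath p hp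
  filter_upwards [hpath, hrate] with ω hpath hrate
  exact hpath.tendsto_inv_mul_sum_gain_mul_pow hcard hrate
    (isLittleO_log_det_designMatrix_sub hS hpath)

end MomentLimit

section MartingaleTransform

variable {Ω : Type*} {d : ℕ} {Φ : ℕ → Ω → Fin d → ℝ} {M0 : Ω → Fin d → ℝ} {ε : ℕ → Ω → ℝ}

lemma Mart_succ (n : ℕ) (ω : Ω) :
    Mart M0 Φ ε (n + 1) ω = Mart M0 Φ ε n ω + ε (n + 1) ω • Φ n ω := by
  rw [Mart, Mart, sum_range_succ, add_assoc]

lemma measurable_Mart {m0 : MeasurableSpace Ω} {F : Filtration ℕ m0}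
    (hM0 : Measurable[F 0] M0) (hΦ : ∀ n, Measurable[F n] (Φ n))
    (hε : ∀ n, Measurable[F n] (ε n)) (n : ℕ) : Measurable[F n] (Mart M0 Φ ε n) := by
  induction n with
  | zero =>
    have h : Mart M0 Φ ε 0 = M0 := funext fun ω => by simp [Mart]
    rwa [h]
  | succ n ih =>
    have hmono : F n ≤ F (n + 1) := F.mono n.le_succ
    rw [funext (Mart_succ n)]
    exact (ih.mono hmono le_rfl).add ((hε (n + 1)).smul ((hΦ n).mono hmono le_rfl))

lemma elllim_eq (d : ℕ) {p : ℕ} (hp : 1 ≤ p) (σ : ℝ) :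
    elllim d p σ = σ ^ (2 * p) * ∏ j ∈ range p, ((d : ℝ) + 2 * j) := by
  obtain ⟨q, rfl⟩ := Nat.exists_eq_add_of_le' hp
  rw [elllim, Nat.add_sub_cancel, prod_range_succ', Nat.cast_zero, mul_zero, add_zero,
    range_eq_Ico, prod_Ico_add' (fun j : ℕ => (d : ℝ) + 2 * j), zero_add, Ico_add_one_right_eq_Icc]
  ring

end MartingaleTransform

/-- **Theorem 2, first part**: convergence of the even moments in the ASCLT for
vector martingale transforms. -/
theorem asclt_moments_vector
    {Ω : Type*} {m0 : MeasurableSpace Ω} {μ : Measure Ω} [IsProbabilityMeasure μ]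
    (F : Filtration ℕ m0) {d : ℕ} (hd : 0 < d)
    (ε : ℕ → Ω → ℝ) (Φ : ℕ → Ω → Fin d → ℝ) (M0 : Ω → Fin d → ℝ)
    (S L : Matrix (Fin d) (Fin d) ℝ) (hS : S.PosDef) (hL : L.PosDef)
    (σ : ℝ) (p : ℕ) (hp : 1 ≤ p) (a : ℝ) (ha : 2 * p < a)
    (α : ℕ → Ω → ℝ)
    (hεadapt : ∀ n, StronglyMeasurable[F n] (ε n))
    (hεint : ∀ n, Integrable (ε n) μ)
    (hΦadapt : ∀ n, StronglyMeasurable[F n] (Φ n))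
    (hM0 : StronglyMeasurable[F 0] M0)
    (hmds : ∀ n, μ[ε (n + 1)|F n] =ᵐ[μ] 0)
    (hvar : ∀ n, μ[fun ω => ε (n + 1) ω ^ 2|F n] =ᵐ[μ] fun _ => σ ^ 2)
    (hmomint : ∀ n, Integrable (fun ω => |ε (n + 1) ω| ^ a) μ)
    (hmom : ∀ᵐ ω ∂μ, ∃ C : ℝ, ∀ n, (μ[fun ω => |ε (n + 1) ω| ^ a|F n]) ω ≤ C)
    (hf0 : ∀ᵐ ω ∂μ, Tendsto (fun n => expl S Φ n ω) atTop (𝓝 0))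
    (hαmeas : ∀ n, Measurable (α n))
    (hαpos : ∀ n ω, 0 < α n ω)
    (hαmono : ∀ᵐ ω ∂μ, Monotone fun n => α n ω)
    (hαtop : ∀ᵐ ω ∂μ, Tendsto (fun n => α n ω) atTop atTop)
    (hconv : ∀ᵐ ω ∂μ, Tendsto (fun n => (α n ω)⁻¹ • Smat S Φ n ω) atTop (𝓝 L)) :
    ∀ᵐ ω ∂μ, Tendsto (fun n =>
      (Real.log ((Smat S Φ n ω).det))⁻¹ *
        ∑ k ∈ Finset.Icc 1 n,
          expl S Φ k ω *
            (Mart M0 Φ ε k ω ⬝ᵥ ((Smat S Φ (k - 1) ω)⁻¹ *ᵥ Mart M0 Φ ε k ω)) ^ p)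
      atTop (𝓝 (elllim d p σ)) := by
  have : Nonempty (Fin d) := ⟨⟨0, hd⟩⟩
  have hξ : IsMomentNoise μ F (fun n => ε (n + 1)) σ a :=
  { measurable := fun n => (hεadapt (n + 1)).measurable
    integrable := fun n => hεint (n + 1)
    condExp_eq_zero := hmds
    condExp_sq := hvar
    integrable_rpow := hmomint
    condExp_rpow_le := hmom }
  have hM := measurable_Mart hM0.measurable (fun n => (hΦadapt n).measurable)
    fun n => (hεadapt n).measurable
  filter_upwards [asclt_moments_vector_general hξ hS hL (fun n => (hΦadapt n).measurable) hM
    Mart_succ hf0 hαtop hconv p ha] with ω hω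
  rw [Fintype.card_fin, ← elllim_eq d hp] at hω
  refine hω.congr fun n => congrArg _ (sum_congr rfl fun k hk => ?_)
  obtain ⟨j, rfl⟩ := Nat.exists_eq_add_of_le' (mem_Icc.mp hk).1
  rfl
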